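/- arXiv:2305.04781 — 7 statements merged into one kernel-verified Lean document; each statement's English description precedes it below -/
import Mathlib

section
/- Let p be a prime and s ≥ 1. Let m_1 < m_2 < … < m_s be integers with m_1 > 0, and let c_1, …, c_s be integers with 0 < c_i < p for each i. Set n = c_1·p^{m_1} + c_2·p^{m_2} + … + c_s·p^{m_s}, z_0 = 0 and z_i = c_1·p^{m_1} + … + c_i·p^{m_i} for 1 ≤ i ≤ s. Then for each i with 1 ≤ i ≤ s, one has v_p((n − z_{i−1})!) − v_p((n − z_i)!) = c_i·(p^{m_i} − 1)/(p − 1). Equivalently, the slope of the i-th edge of the Newton polygon formed by the points (z, v_p(n!/(n−z)!)) is (p^{m_i} − 1)/(p^{m_i}·(p − 1)). -/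
theorem aux_ds (p : ℕ) (hp : p.Prime) (a x : ℕ) :
    (Nat.digits p (p ^ a * x)).sum = (Nat.digits p x).sum := by
  rcases Nat.eq_zero_or_pos x with h | h
  · simp [h]
  · rw [Nat.digits_base_pow_mul hp.one_lt h]
    simp

theorem aux_step (p : ℕ) (hp : p.Prime) (a c q : ℕ) (h0 : 0 < c) (hc : c < p) :
    (p - 1) * padicValNat p (c * p ^ a + p ^ (a + 1) * q).factorial + c
      = (p - 1) * padicValNat p (p ^ (a + 1) * q).factorial + c * p ^ a := by
  have := Fact.mk hp
  have e1 : c * p ^ a + p ^ (a + 1) * q = p ^ a * (c + p * q) := by ring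
  have d1 : (Nat.digits p (c * p ^ a + p ^ (a + 1) * q)).sum = c + (Nat.digits p q).sum := by
    rw [e1, aux_ds p hp, Nat.digits_add p hp.one_lt c q hc (Or.inl h0.ne')]
    simp
  have d2 := aux_ds p hp (a + 1) q
  have l1 := sub_one_mul_padicValNat_factorial (p := p) (c * p ^ a + p ^ (a + 1) * q)
  have l2 := sub_one_mul_padicValNat_factorial (p := p) (p ^ (a + 1) * q)
  have b1 := Nat.digit_sum_le p (c * p ^ a + p ^ (a + 1) * q)
  have b2 := Nat.digit_sum_le p (p ^ (a + 1) * q)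
  rw [d1] at l1 b1
  rw [d2] at l2 b2
  omega

/-- Let `p` be a prime and `n = c_1·p^{m_1} + ⋯ + c_s·p^{m_s}` with
`0 < m_1 < ⋯ < m_s` and `0 < c_i < p`. With `z_0 = 0` and
`z_i = c_1·p^{m_1} + ⋯ + c_i·p^{m_i}`, for each `1 ≤ i ≤ s` one has
`v_p((n - z_{i-1})!) - v_p((n - z_i)!) = c_i·(p^{m_i} - 1)/(p - 1)`. -/
theorem newton_polygon_slopes (p : ℕ) (hp : p.Prime) (s : ℕ) (hs : 1 ≤ s)
    (m c : ℕ → ℕ) (hm1 : 0 < m 1)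
    (hmono : ∀ i j, 1 ≤ i → i < j → j ≤ s → m i < m j)
    (hc : ∀ i, 1 ≤ i → i ≤ s → 0 < c i ∧ c i < p)
    (z : ℕ → ℕ) (hz : ∀ i, z i = ∑ j ∈ Finset.Icc 1 i, c j * p ^ m j)
    (n : ℕ) (hn : n = z s) :
    ∀ i, 1 ≤ i → i ≤ s →
      (padicValNat p (n - z (i - 1)).factorial : ℤ)
        - (padicValNat p (n - z i).factorial : ℤ)
      = (c i : ℤ) * ((p : ℤ) ^ m i - 1) / ((p : ℤ) - 1) := by
  intro i hi his
  have hsplit : ∀ k, k ≤ s → n - z k = ∑ j ∈ Finset.Ioc k s, c j * p ^ m j := by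
    intro k hk
    have h : ∀ k, z k = ∑ j ∈ Finset.Ioc 0 k, c j * p ^ m j := fun k => by
      rw [hz]; rfl
    rw [hn, h s, h k, ← Finset.sum_Ioc_consecutive _ (Nat.zero_le k) hk]
    simp
  have hd : p ^ (m i + 1) ∣ n - z i := by
    rw [hsplit i his]
    refine Finset.dvd_sum fun j hj => ?_
    rw [Finset.mem_Ioc] at hj
    exact Dvd.dvd.mul_left (pow_dvd_pow p (hmono i j hi hj.1 hj.2)) _
  have hr : n - z (i - 1) = c i * p ^ m i + (n - z i) := by
    rw [hsplit i his, hsplit (i - 1) (by omega),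
      ← Finset.sum_Ioc_consecutive _ (Nat.sub_le i 1) his]
    obtain ⟨k, rfl⟩ : ∃ k, i = k + 1 := ⟨i - 1, by omega⟩
    simp
  obtain ⟨q, hq⟩ := hd
  rw [hr, hq]
  obtain ⟨h0, h1⟩ := hc i hi his
  have key := aux_step p hp (m i) (c i) q h0 h1
  have h2 := hp.two_le
  generalize padicValNat p (c i * p ^ m i + p ^ (m i + 1) * q).factorial = A at key ⊢
  generalize padicValNat p (p ^ (m i + 1) * q).factorial = B at key ⊢
  zify [hp.one_le] at key
  symm
  apply Int.ediv_eq_of_eq_mul_left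
  · have : (2 : ℤ) ≤ p := by exact_mod_cast h2
    omega
  · linear_combination -key
end

section
/- Let n ≥ 2 be an integer, q a prime dividing n, and let φ ∈ ℤ[x] be a monic polynomial whose reduction modulo q is irreducible in 𝔽_q[x]. Let a_0(x), …, a_{n−1}(x) ∈ ℤ[x] be polynomials each of degree strictly less than deg φ with a_0(x) ≠ 0, and let a_n be an integer not divisible by q. Then the polynomial F(x) = Σ_{i=0}^{n−1} (n!/i!)·a_i(x)·φ(x)^i + a_n·φ(x)^n has no divisor g ∈ ℤ[x] with 0 < deg g < deg φ. -/
open Polynomial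

/-- Step I of the proof of the main theorem: if `q` is a prime dividing `n`, `φ` is monic
and irreducible mod `q`, each `a i` has degree `< deg φ` with `a 0 ≠ 0`, and `q ∤ an`,
then `F = ∑_{i<n} (n!/i!)·(a i)·φ^i + an·φ^n` has no divisor `g ∈ ℤ[x]` with
`0 < deg g < deg φ`. -/
theorem no_small_degree_factor (n : ℕ) (hn : 2 ≤ n) (q : ℕ) (hq : q.Prime) (hqn : q ∣ n)
    (φ : ℤ[X]) (hφmonic : φ.Monic)
    (hφirr : Irreducible (φ.map (Int.castRingHom (ZMod q))))
    (a : ℕ → ℤ[X]) (an : ℤ)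
    (hdeg : ∀ i < n, (a i).degree < φ.degree)
    (ha0 : a 0 ≠ 0)
    (han : ¬ (q : ℤ) ∣ an) :
    ¬ ∃ g : ℤ[X], g ∣ (∑ i ∈ Finset.range n,
          C ((n.factorial / i.factorial : ℕ) : ℤ) * a i * φ ^ i
        + C an * φ ^ n) ∧
      0 < g.natDegree ∧ g.natDegree < φ.natDegree := by
  rintro ⟨g, hg, hg0, hgφ⟩
  haveI : Fact q.Prime := ⟨hq⟩
  set f := Int.castRingHom (ZMod q) with hf
  have hanq : f an ≠ 0 := by
    rw [hf, eq_intCast, Ne, ZMod.intCast_zmod_eq_zero_iff_dvd an q]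
    exact han
  have han0 : an ≠ 0 := by
    rintro rfl
    simp at han
  set S := ∑ i ∈ Finset.range n,
    C ((n.factorial / i.factorial : ℕ) : ℤ) * a i * φ ^ i with hS
  have hlast : (C an * φ ^ n).degree = n * φ.degree := by
    rw [degree_C_mul han0, degree_pow, nsmul_eq_mul]
  have hφd : φ.degree = (φ.natDegree : WithBot ℕ) := degree_eq_natDegree hφmonic.ne_zero
  have hSdeg : S.degree < (C an * φ ^ n).degree := by
    rw [hlast]
    refine lt_of_le_of_lt (degree_sum_le _ _) ?_
    rw [Finset.sup_lt_iff]
    · intro i hi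
      have hi' := Finset.mem_range.mp hi
      by_cases h0 : C ((n.factorial / i.factorial : ℕ) : ℤ) * a i * φ ^ i = 0
      · rw [h0, degree_zero, hφd]
        exact_mod_cast WithBot.bot_lt_coe (n * φ.natDegree)
      · have hai : a i ≠ 0 := by
          intro h
          simp [h] at h0
        have h1 := natDegree_lt_natDegree hai (hdeg i hi')
        rw [degree_eq_natDegree h0, hφd]
        have h2 : (C ((n.factorial / i.factorial : ℕ) : ℤ) * a i * φ ^ i).natDegree
            ≤ (a i).natDegree + i * φ.natDegree := by
          refine natDegree_mul_le.trans ?_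
          exact add_le_add (natDegree_C_mul_le _ _) natDegree_pow_le
        have h3 : (i + 1) * φ.natDegree ≤ n * φ.natDegree := Nat.mul_le_mul_right _ hi'
        have h4 : (C ((n.factorial / i.factorial : ℕ) : ℤ) * a i * φ ^ i).natDegree
            < n * φ.natDegree := by linarith
        exact_mod_cast h4
    · rw [hφd]
      exact_mod_cast WithBot.bot_lt_coe (n * φ.natDegree)
  have hlc : (S + C an * φ ^ n).leadingCoeff = an := by
    rw [leadingCoeff_add_of_degree_lt hSdeg, leadingCoeff_mul, leadingCoeff_C,
      (hφmonic.pow n).leadingCoeff, mul_one]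
  have hSmap : S.map f = 0 := by
    rw [hS, Polynomial.map_sum]
    refine Finset.sum_eq_zero fun i hi => ?_
    have hi' := Finset.mem_range.mp hi
    have hd : q ∣ n.factorial / i.factorial := by
      refine hqn.trans ?_
      obtain ⟨m, rfl⟩ : ∃ m, n = m + 1 := ⟨n - 1, by omega⟩
      rw [Nat.factorial_succ, Nat.mul_div_assoc _ (Nat.factorial_dvd_factorial (by omega))]
      exact Dvd.intro _ rfl
    have hz : f ((n.factorial / i.factorial : ℕ) : ℤ) = 0 := by
      rw [map_natCast, ZMod.natCast_eq_zero_iff]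
      exact hd
    rw [Polynomial.map_mul, Polynomial.map_mul, map_C, hz]
    simp
  have hglc : f g.leadingCoeff ≠ 0 := by
    have h : g.leadingCoeff ∣ an := by
      rw [← hlc]
      exact leadingCoeff_dvd_leadingCoeff hg
    obtain ⟨c, hc⟩ := h
    intro h0
    apply hanq
    rw [hc, map_mul, h0, zero_mul]
  have hgdeg : (g.map f).natDegree = g.natDegree := natDegree_map_of_leadingCoeff_ne_zero f hglc
  have hdvd : g.map f ∣ C (f an) * (φ.map f) ^ n := by
    have := Polynomial.map_dvd f hg
    rwa [Polynomial.map_add, hSmap, zero_add, Polynomial.map_mul, map_C,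
      Polynomial.map_pow] at this
  have hnd : ¬ φ.map f ∣ g.map f := by
    intro h
    have hne : g.map f ≠ 0 := by
      intro h0
      rw [h0] at hgdeg
      simp at hgdeg
      omega
    have := natDegree_le_of_dvd h hne
    rw [hgdeg, hφmonic.natDegree_map] at this
    omega
  have hcop : IsCoprime (g.map f) ((φ.map f) ^ n) :=
    (((Irreducible.coprime_iff_not_dvd hφirr).mpr hnd).symm).pow_right
  have hdC := hcop.dvd_of_dvd_mul_right hdvd
  have := natDegree_le_of_dvd hdC (C_ne_zero.mpr hanq)
  rw [natDegree_C, hgdeg] at this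
  omega
end

section
/- Let n ≥ 2 be an integer and let φ ∈ ℤ[x] be a monic polynomial whose reduction modulo p is irreducible in 𝔽_p[x] for every prime p ≤ n. Let a_0(x), a_1(x), …, a_{n−1}(x) ∈ ℤ[x] be polynomials each of degree strictly less than deg φ, and let a_n be an integer. Assume that a_n is coprime to n! and that the content of a_0(x) is coprime to n!. Then for every integer k with 1 ≤ k ≤ n/2, the polynomial F(x) = Σ_{i=0}^{n−1} (n!/i!)·a_i(x)·φ(x)^i + a_n·φ(x)^n has no factor in ℤ[x] whose degree lies in the interval [k·deg φ, (k+1)·deg φ). -/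
open Polynomial

namespace Syl


theorem desc_ratio (m n : ℕ) (h : m ≤ n) (j : ℕ) :
    n ^ j * m.descFactorial j ≤ m ^ j * n.descFactorial j := by
  induction j with
  | zero => simp
  | succ j ih =>
    rw [Nat.descFactorial_succ, Nat.descFactorial_succ, pow_succ, pow_succ]
    have h1 : n * (m - j) ≤ m * (n - j) := by
      rw [Nat.mul_sub, Nat.mul_sub, mul_comm n m]
      have := Nat.mul_le_mul_right j h
      omega
    calc n ^ j * n * ((m - j) * m.descFactorial j)
        = (n * (m - j)) * (n ^ j * m.descFactorial j) := by ring
      _ ≤ (m * (n - j)) * (m ^ j * n.descFactorial j) := Nat.mul_le_mul h1 ih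
      _ = _ := by ring

theorem choose_lower (n k : ℕ) (hk : 0 < k) (h : 2 * k ≤ n) :
    (2 * n) ^ k ≤ 2 * k * k ^ k * n.choose k := by
  have h1 := desc_ratio (2 * k) n h k
  rw [Nat.descFactorial_eq_factorial_mul_choose, Nat.descFactorial_eq_factorial_mul_choose] at h1
  have h2 : n ^ k * (2 * k).choose k ≤ (2 * k) ^ k * n.choose k := by
    have := Nat.factorial_pos k
    refine Nat.le_of_mul_le_mul_left ?_ this
    linarith
  have h3 := Nat.four_pow_le_two_mul_self_mul_centralBinom k hk
  rw [Nat.centralBinom] at h3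
  have h4 : 0 < (2:ℕ) ^ k := by positivity
  refine Nat.le_of_mul_le_mul_left ?_ h4
  calc 2 ^ k * (2 * n) ^ k = n ^ k * 4 ^ k := by
        rw [← mul_pow, ← mul_pow]; congr 1; ring
    _ ≤ n ^ k * (2 * k * (2 * k).choose k) := Nat.mul_le_mul_left _ h3
    _ = 2 * k * (n ^ k * (2 * k).choose k) := by ring
    _ ≤ 2 * k * ((2 * k) ^ k * n.choose k) := Nat.mul_le_mul_left _ h2
    _ = _ := by rw [mul_pow]; ring

def Smooth (n k : ℕ) : Prop := ∀ p : ℕ, p.Prime → p ∣ n.choose k → p ≤ k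

theorem choose_prod (n k M : ℕ) (hkn : 2 * k ≤ n) (hM : M ≤ n)
    (h0 : ∀ p : ℕ, p.Prime → p ∣ n.choose k → p ≤ M) :
    n.choose k = ∏ p ∈ (Finset.range (M + 1)).filter Nat.Prime,
      p ^ (n.choose k).factorization p := by
  rw [Finset.prod_filter_of_ne]
  · conv_lhs => rw [← Nat.prod_pow_factorization_choose n k (by omega)]
    symm
    apply Finset.prod_subset
    · intro x; simp; omega
    · intro x hx hx2
      by_cases hp : x.Prime
      · by_cases hd : x ∣ n.choose k
        · exact absurd (h0 x hp hd) (by simp at hx2; omega)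
        · rw [Nat.factorization_eq_zero_of_not_dvd hd, pow_zero]
      · rw [Nat.factorization_eq_zero_of_not_prime _ hp, pow_zero]
  · intro p _ h
    by_contra hp
    apply h
    rw [Nat.factorization_eq_zero_of_not_prime _ hp, pow_zero]

theorem upper1 (n k : ℕ) (hk : 0 < k) (hkn : 2 * k ≤ n) (h : Smooth n k) :
    n.choose k ≤ n ^ (Nat.primeCounting k) := by
  rw [choose_prod n k k hkn (by omega) h]
  refine (Finset.prod_le_prod' fun p _ => (Nat.pow_factorization_choose_le (by omega) :
    p ^ (n.choose k).factorization p ≤ n)).trans ?_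
  rw [Finset.prod_const, Nat.primeCounting, Nat.primeCounting', Nat.count_eq_card_filter_range]

theorem upper2 (n k M : ℕ) (hk : 0 < k) (hkn : 2 * k ≤ n) (hM : M ≤ n)
    (h : ∀ p : ℕ, p.Prime → p ∣ n.choose k → p ≤ M) :
    n.choose k ≤ n ^ (Nat.sqrt n) * 4 ^ M := by
  rw [choose_prod n k M hkn hM h]
  set S := (Finset.range (M + 1)).filter Nat.Prime with hS
  rw [← Finset.prod_filter_mul_prod_filter_not S (· ≤ Nat.sqrt n)]
  apply mul_le_mul'
  · refine (Finset.prod_le_prod' fun p _ => (Nat.pow_factorization_choose_le (by omega) :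
      p ^ (n.choose k).factorization p ≤ n)).trans ?_
    have : (Finset.Icc 1 (Nat.sqrt n)).card = Nat.sqrt n := by
      rw [Nat.card_Icc, Nat.add_sub_cancel]
    rw [Finset.prod_const]
    refine pow_right_mono₀ (by omega) ((Finset.card_le_card fun x hx => ?_).trans this.le)
    obtain ⟨h1, h2⟩ := Finset.mem_filter.1 hx
    exact Finset.mem_Icc.mpr ⟨(Finset.mem_filter.1 h1).2.one_lt.le, h2⟩
  · refine le_trans ?_ (primorial_le_four_pow M)
    refine (Finset.prod_le_prod' fun p hp => (?_ : p ^ (n.choose k).factorization p ≤ p)).trans ?_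
    · obtain ⟨h1, h2⟩ := Finset.mem_filter.1 hp
      refine (pow_right_mono₀ (Finset.mem_filter.1 h1).2.one_lt.le ?_).trans (pow_one p).le
      exact Nat.factorization_choose_le_one (Nat.sqrt_lt'.mp <| not_le.1 h2)
    refine Finset.prod_le_prod_of_subset_of_one_le' (Finset.filter_subset _ _) ?_
    exact fun p hp _ => (Finset.mem_filter.1 hp).2.one_lt.le

theorem pi_third (k : ℕ) (hk : 37 ≤ k) : 3 * Nat.primeCounting k ≤ k := by
  by_cases h : k < 54
  · interval_cases k <;> decide +kernel
  · obtain ⟨m, rfl⟩ := Nat.exists_eq_add_of_le (not_lt.1 h)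
    have := Nat.primeCounting_add_le (a := 6) (k := 54) (by norm_num) (by norm_num) m
    have h2 : Nat.primeCounting 54 = 16 := by decide +kernel
    have h3 : Nat.totient 6 = 2 := by decide
    rw [h2, h3] at this
    omega

theorem two_pow_gt (k : ℕ) (hk : 15 ≤ k) : 8 * k ^ 3 < 2 ^ k := by
  induction k, hk using Nat.le_induction with
  | base => norm_num
  | succ k hk ih =>
    rw [pow_succ 2 k]
    have : (k + 1) ^ 3 ≤ 2 * k ^ 3 := by nlinarith [Nat.mul_le_mul hk hk, mul_pos (show 0 < k by omega) (show 0 < k by omega)]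
    omega

theorem bound_mid (n k : ℕ) (hk : 37 ≤ k) (hkn : 2 * k ≤ n) (h : Smooth n k) :
    4 * n ^ 2 < k ^ 3 := by
  have h1 := choose_lower n k (by omega) hkn
  have h2 := upper1 n k (by omega) hkn h
  have h3 := pi_third k hk
  by_contra! hc
  have h4 : ((2 * n) ^ k) ^ 3 ≤ (2 * k * k ^ k) ^ 3 * n ^ k := by
    calc ((2 * n) ^ k) ^ 3 ≤ (2 * k * k ^ k * n ^ (Nat.primeCounting k)) ^ 3 :=
          Nat.pow_le_pow_left (h1.trans (Nat.mul_le_mul_left _ h2)) 3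
      _ = (2 * k * k ^ k) ^ 3 * n ^ (3 * Nat.primeCounting k) := by rw [mul_pow, ← pow_mul, mul_comm 3]
      _ ≤ _ := Nat.mul_le_mul_left _ (Nat.pow_le_pow_right (by omega) h3)
  have h5 : (8 * n ^ 2) ^ k ≤ 8 * k ^ 3 * (k ^ 3) ^ k := by
    have hn : 0 < n ^ k := by have : 0 < n := by omega
                              positivity
    refine Nat.le_of_mul_le_mul_right ?_ hn
    calc (8 * n ^ 2) ^ k * n ^ k = ((2 * n) ^ k) ^ 3 := by
          rw [← mul_pow, ← pow_mul, mul_comm k 3, pow_mul]; congr 1; ring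
      _ ≤ _ := h4
      _ = _ := by rw [← pow_mul k 3 k, mul_comm 3 k, pow_mul k k 3]; ring
  have h6 : (2 * k ^ 3) ^ k ≤ 8 * k ^ 3 * (k ^ 3) ^ k :=
    (Nat.pow_le_pow_left (by omega) k).trans h5
  rw [mul_pow] at h6
  have h7 := Nat.le_of_mul_le_mul_right h6 (by have : 0 < k := by omega
                                               positivity)
  have := two_pow_gt k (by omega)
  omega



def findP (P : ℕ) : ℕ → ℕ → ℕ
  | 0, t => t
  | d + 1, t => if Nat.gcd (t + d + 1) P = 1 then t + d + 1 else findP P d t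

def chainP (P g : ℕ) : ℕ → ℕ → ℕ
  | 0, t => t
  | f + 1, t => chainP P g f (findP P g t)

theorem findP_spec (P d t : ℕ) (ht : Nat.gcd t P = 1) :
    t ≤ findP P d t ∧ findP P d t ≤ t + d ∧ Nat.gcd (findP P d t) P = 1 := by
  induction d with
  | zero => simp [findP, ht]
  | succ d ih =>
    rw [findP]
    split_ifs with h
    · exact ⟨by omega, by omega, h⟩
    · exact ⟨ih.1, by omega, ih.2.2⟩

theorem chainP_spec (P g n f : ℕ) : ∀ t : ℕ, Nat.gcd t P = 1 → t ≤ n → n < chainP P g f t →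
    ∃ q, Nat.gcd q P = 1 ∧ q ≤ n ∧ n < q + g ∧ t ≤ q := by
  induction f with
  | zero => intro t _ h1 h2; simp [chainP] at h2; omega
  | succ f ih =>
    intro t ht h1 h2
    rw [chainP] at h2
    obtain ⟨a, b, c⟩ := findP_spec P g t ht
    by_cases h : findP P g t ≤ n
    · obtain ⟨q, hq⟩ := ih _ c h h2
      exact ⟨q, hq.1, hq.2.1, hq.2.2.1, by omega⟩
    · exact ⟨t, ht, h1, by omega, le_rfl⟩

theorem prime_of_gcd (B P q : ℕ) (hP : ∀ r < B + 1, 2 ≤ r → Nat.gcd r P ≠ 1)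
    (hq : Nat.gcd q P = 1) (h1 : 2 ≤ q) (h2 : q < (B + 1) ^ 2) : q.Prime := by
  by_contra hn
  have h3 := Nat.minFac_sq_le_self (by omega) hn
  have h4 : q.minFac < B + 1 := lt_of_pow_lt_pow_left₀ 2 (by omega) (h3.trans_lt h2)
  have h5 := Nat.minFac_prime (n := q) (by omega)
  apply hP _ h4 h5.two_le
  exact Nat.Coprime.coprime_dvd_left (Nat.minFac_dvd q) hq

theorem chunk (B P g t f T n k : ℕ) (hP : ((List.range (B + 1)).all fun r => decide (r < 2) || decide (Nat.gcd r P ≠ 1)) = true)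
    (ht : Nat.gcd t P = 1) (ht2 : 2 ≤ t) (hf : T ≤ chainP P g f t) (hT : T ≤ (B + 1) ^ 2)
    (hgk : g ≤ k) (htn : t ≤ n) (hnT : n < T) : ∃ q : ℕ, q.Prime ∧ q ≤ n ∧ n < q + k := by
  obtain ⟨q, h1, h2, h3, h4⟩ := chainP_spec P g n f t ht htn (by omega)
  refine ⟨q, prime_of_gcd B P q ?_ h1 (by omega) (by omega), h2, by omega⟩
  intro r hr hr2
  rw [List.all_eq_true] at hP
  have := hP r (List.mem_range.2 hr)
  simp at this
  rcases this with h | h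
  · omega
  · exact h

theorem mid_range (n k : ℕ) (hk : 32 ≤ k) (hk2 : k < 2 ^ 15) (hkn : 2 * k ≤ n)
    (hn : 4 * n ^ 2 < k ^ 3) : ∃ q : ℕ, q.Prime ∧ q ≤ n ∧ n < q + k := by
  have key : ∀ K T : ℕ, k ≤ K → K ^ 3 ≤ 4 * T ^ 2 → n < T := by
    intro K T h1 h2
    have := Nat.pow_le_pow_left h1 3
    exact lt_of_pow_lt_pow_left₀ 2 (by omega) (by omega : n ^ 2 < T ^ 2)
  by_cases h5 : k < 64
  · exact chunk 46 13082761331670030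
      32 61 8 258 n k (by decide +kernel) (by decide +kernel) (by norm_num) (by decide +kernel)
      (by norm_num) (by omega) (by omega) (key 64 258 (by omega) (by norm_num))
  by_cases h6 : k < 128
  · exact chunk 46 13082761331670030
      64 127 11 726 n k (by decide +kernel) (by decide +kernel) (by norm_num) (by decide +kernel)
      (by norm_num) (by omega) (by omega) (key 128 726 (by omega) (by norm_num))
  by_cases h7 : k < 256
  · exact chunk 46 13082761331670030
      128 251 15 2050 n k (by decide +kernel) (by decide +kernel) (by norm_num) (by decide +kernel)
      (by norm_num) (by omega) (by omega) (key 256 2050 (by omega) (by norm_num))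
  by_cases h8 : k < 512
  · exact chunk 363 33145029365917644537041586451002838777754047982048976093256545773949681076083753038263261851007891975336318712022358509317861766127318306017798990
      256 509 22 5794 n k (by decide +kernel) (by decide +kernel) (by norm_num) (by decide +kernel)
      (by norm_num) (by omega) (by omega) (key 512 5794 (by omega) (by norm_num))
  by_cases h9 : k < 1024
  · exact chunk 363 33145029365917644537041586451002838777754047982048976093256545773949681076083753038263261851007891975336318712022358509317861766127318306017798990
      512 1021 31 16386 n k (by decide +kernel) (by decide +kernel) (by norm_num) (by decide +kernel)
      (by norm_num) (by omega) (by omega) (key 1024 16386 (by omega) (by norm_num))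
  by_cases h10 : k < 2048
  · exact chunk 363 33145029365917644537041586451002838777754047982048976093256545773949681076083753038263261851007891975336318712022358509317861766127318306017798990
      1024 2039 44 46342 n k (by decide +kernel) (by decide +kernel) (by norm_num) (by decide +kernel)
      (by norm_num) (by omega) (by omega) (key 2048 46342 (by omega) (by norm_num))
  by_cases h11 : k < 4096
  · exact chunk 363 33145029365917644537041586451002838777754047982048976093256545773949681076083753038263261851007891975336318712022358509317861766127318306017798990
      2048 4093 63 131074 n k (by decide +kernel) (by decide +kernel) (by norm_num) (by decide +kernel)
      (by norm_num) (by omega) (by omega) (key 4096 131074 (by omega) (by norm_num))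
  by_cases h12 : k < 8192
  · exact chunk 1725 177357498179798513502337418209913892232120179466939033328017647597065186806246186349099342955355942691714279527129690179895917491029468213181036241439526563110149992883977188020168531457887637577356360029647486584437689514678396163609249392936378056914608761526476100145917444942995744269446403989276619439859872876684861667648387469409403855614341752213769472361290066299415804101439447069685937240891486989413259241075233400787156139357710138713622718519068823118745204758954398411550220832948913390913753263178786351165826864377853759158231693225858403781013457786493236220847604112346510477692954792590646018250304928788795883922673948997481322154210434971978401760602085241156669771386090114490307228798440087353199020148062530
      4096 8191 89 370729 n k (by decide +kernel) (by decide +kernel) (by norm_num) (by decide +kernel)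
      (by norm_num) (by omega) (by omega) (key 8192 370729 (by omega) (by norm_num))
  by_cases h13 : k < 16384
  · exact chunk 1725 177357498179798513502337418209913892232120179466939033328017647597065186806246186349099342955355942691714279527129690179895917491029468213181036241439526563110149992883977188020168531457887637577356360029647486584437689514678396163609249392936378056914608761526476100145917444942995744269446403989276619439859872876684861667648387469409403855614341752213769472361290066299415804101439447069685937240891486989413259241075233400787156139357710138713622718519068823118745204758954398411550220832948913390913753263178786351165826864377853759158231693225858403781013457786493236220847604112346510477692954792590646018250304928788795883922673948997481322154210434971978401760602085241156669771386090114490307228798440087353199020148062530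
      8192 16381 127 1048578 n k (by decide +kernel) (by decide +kernel) (by norm_num) (by decide +kernel)
      (by norm_num) (by omega) (by omega) (key 16384 1048578 (by omega) (by norm_num))
  exact chunk 1725 177357498179798513502337418209913892232120179466939033328017647597065186806246186349099342955355942691714279527129690179895917491029468213181036241439526563110149992883977188020168531457887637577356360029647486584437689514678396163609249392936378056914608761526476100145917444942995744269446403989276619439859872876684861667648387469409403855614341752213769472361290066299415804101439447069685937240891486989413259241075233400787156139357710138713622718519068823118745204758954398411550220832948913390913753263178786351165826864377853759158231693225858403781013457786493236220847604112346510477692954792590646018250304928788795883922673948997481322154210434971978401760602085241156669771386090114490307228798440087353199020148062530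
    16384 32749 180 2965822 n k (by decide +kernel) (by decide +kernel) (by norm_num) (by decide +kernel)
    (by norm_num) (by omega) (by omega) (key 32768 2965822 (by omega) (by norm_num))


theorem smooth_dvd (n k : ℕ) (h : Smooth n k) (hkn : k ≤ n) :
    n.choose k ∣ (k.factorial) ^ n := by
  have hc := Nat.choose_ne_zero hkn
  rw [← Nat.factorization_prime_le_iff_dvd hc (by positivity)]
  intro p hp
  by_cases hd : p ∣ n.choose k
  · rw [Nat.factorization_pow]
    have h1 : 1 ≤ k.factorial.factorization p :=
      (hp.dvd_iff_one_le_factorization (by positivity)).1 ((hp.dvd_factorial).2 (h p hp hd))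
    have h2 : (n.choose k).factorization p ≤ Nat.log p n := Nat.factorization_choose_le_log
    have h3 : Nat.log p n ≤ n := Nat.log_le_self p n
    simp only [Finsupp.smul_apply, smul_eq_mul]
    nlinarith
  · rw [Nat.factorization_eq_zero_of_not_dvd hd]; omega

theorem small_check : ∀ k < 37, 0 < k → ∀ n < 100, 2 * k ≤ n →
    ¬ (n.choose k ∣ (k.factorial) ^ n) := by
  have : ∀ k < 37, 0 < k → ∀ n < 100, 2 * k ≤ n →
    ¬ (n.descFactorial k / k.factorial ∣ (k.factorial) ^ n) := by decide +kernel
  intro k h1 h2 n h3 h4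
  rw [Nat.choose_eq_descFactorial_div_factorial]
  exact this k h1 h2 n h3 h4

theorem small_bound : ∀ k < 37, 0 < k → Nat.primeCounting k ≤ k ∧
    2 * k * k ^ k < 2 ^ k * 100 ^ (k - Nat.primeCounting k) := by decide +kernel

theorem small (n k : ℕ) (hk : 0 < k) (hk2 : k < 37) (hkn : 2 * k ≤ n) : ¬ Smooth n k := by
  intro h
  by_cases hn : n < 100
  · exact small_check k hk2 hk n hn hkn (smooth_dvd n k h (by omega))
  · have h1 := choose_lower n k hk hkn
    have h2 := upper1 n k hk hkn h
    obtain ⟨h3, h4⟩ := small_bound k hk2 hk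
    have h5 : 100 ^ (k - Nat.primeCounting k) ≤ n ^ (k - Nat.primeCounting k) :=
      Nat.pow_le_pow_left (by omega) _
    have h6 : 0 < n ^ (Nat.primeCounting k) := by
      have : 0 < n := by omega
      positivity
    have h7 : n ^ k = n ^ (k - Nat.primeCounting k) * n ^ (Nat.primeCounting k) := by
      rw [← pow_add]; congr 1; omega
    have h8 : (2 * n) ^ k ≤ 2 * k * k ^ k * n ^ (Nat.primeCounting k) :=
      h1.trans (Nat.mul_le_mul_left _ h2)
    rw [mul_pow, h7, ← mul_assoc] at h8
    have h9 := Nat.le_of_mul_le_mul_right h8 h6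
    have := Nat.mul_le_mul_left (2 ^ k) h5
    omega

theorem log_ineq (n k M : ℕ) (hk : 0 < k) (hkn : 2 * k ≤ n) (hM : M ≤ n)
    (h : ∀ p : ℕ, p.Prime → p ∣ n.choose k → p ≤ M) :
    (k : ℝ) * Real.log (2 * n / k) ≤ (√(n : ℝ) + 1) * Real.log n + M * Real.log 4 := by
  have h1 := choose_lower n k hk hkn
  have h2 := upper2 n k M hk hkn hM h
  have h3 : (2 * n) ^ k ≤ n * k ^ k * (n ^ (Nat.sqrt n) * 4 ^ M) :=
    h1.trans (Nat.mul_le_mul (Nat.mul_le_mul_right _ hkn) h2)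
  have h4 : ((2 * n : ℝ)) ^ k ≤ n * k ^ k * (n ^ (Nat.sqrt n) * 4 ^ M) := by exact_mod_cast h3
  have hk' : (0 : ℝ) < k := by exact_mod_cast hk
  have hn' : (0 : ℝ) < n := by exact_mod_cast (by omega : 0 < n)
  have h5 := Real.log_le_log (by positivity) h4
  rw [Real.log_pow, Real.log_mul (by positivity) (by positivity),
    Real.log_mul (by positivity) (by positivity), Real.log_mul (by positivity) (by positivity),
    Real.log_mul (by positivity) (by positivity),
    Real.log_pow, Real.log_pow, Real.log_pow] at h5
  rw [Real.log_div (by positivity) (by positivity), Real.log_mul (by positivity) (by positivity)]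
  have h6 : 0 ≤ Real.log n := Real.log_natCast_nonneg n
  have h7 : (Nat.sqrt n : ℝ) ≤ √(n : ℝ) := Real.nat_sqrt_le_real_sqrt
  have := mul_le_mul_of_nonneg_right h7 h6
  linarith

theorem sqrt_log (x : ℝ) (hx : 2 ^ 16 ≤ x) : (√x + 1) * Real.log x ≤ 0.0436 * x := by
  have hx0 : 0 < x := lt_of_lt_of_le (by norm_num) hx
  have he : Real.exp 2 ≤ 2 ^ 16 := by
    have := Real.exp_one_lt_d9
    have h2 : Real.exp 2 = Real.exp 1 ^ 2 := by rw [← Real.exp_nat_mul]; norm_num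
    rw [h2]
    have h3 := Real.exp_pos 1
    nlinarith
  have h1 := Real.log_div_sqrt_antitoneOn (show (2 ^ 16 : ℝ) ∈ {x | Real.exp 2 ≤ x} from he)
    (show x ∈ {x | Real.exp 2 ≤ x} from he.trans hx) hx
  have hs : √(2 ^ 16 : ℝ) = 256 := by
    rw [show (2 ^ 16 : ℝ) = 256 ^ 2 by norm_num]; exact Real.sqrt_sq (by norm_num)
  simp only [hs] at h1
  rw [Real.log_pow] at h1
  have hl := Real.log_two_lt_d9
  have h2 : 256 ≤ √x := by rw [← hs]; exact Real.sqrt_le_sqrt hx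
  rw [div_le_iff₀ (by linarith)] at h1
  have h3 : Real.log x ≤ 0.04333 * √x := by
    push_cast at h1
    have : (16 * Real.log 2 / 256) ≤ 0.04333 := by linarith
    nlinarith
  have h4 : √x * √x = x := Real.mul_self_sqrt hx0.le
  calc (√x + 1) * Real.log x ≤ (√x + 1) * (0.04333 * √x) := by gcongr
    _ = 0.04333 * x + 0.04333 * √x := by linear_combination 0.04333 * h4
    _ ≤ _ := by nlinarith

theorem large (n k : ℕ) (hk : 2 ^ 15 ≤ k) (hkn : 2 * k ≤ n) : ¬ Smooth n k := by
  intro h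
  have hb := bound_mid n k (by omega) hkn h
  have hk' : (2 ^ 15 : ℝ) ≤ k := by exact_mod_cast hk
  have hk0 : (0 : ℝ) < k := by linarith [show (0:ℝ) < 2 ^ 15 by norm_num]
  have hkn' : (2 : ℝ) * k ≤ n := by exact_mod_cast hkn
  have hS := sqrt_log n (by linarith)
  have hl2 := Real.log_two_gt_d9
  have hl4 : Real.log 4 = 2 * Real.log 2 := by
    rw [show (4 : ℝ) = 2 ^ 2 by norm_num, Real.log_pow]; norm_num
  by_cases c1 : 2 * n ≤ 5 * k
  · have h3 := log_ineq n k (n / 3) (by omega) hkn (by omega) ?_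
    · have c1' : (2 : ℝ) * n ≤ 5 * k := by exact_mod_cast c1
      have h4 : ((n / 3 : ℕ) : ℝ) ≤ n / 3 := Nat.cast_div_le
      have h5 : Real.log 4 ≤ Real.log (2 * n / k) := by
        apply Real.log_le_log (by norm_num)
        rw [le_div_iff₀ hk0]; linarith
      rw [hl4] at h3 h5
      have h6 := mul_le_mul_of_nonneg_left h5 hk0.le
      have h7 : ((n / 3 : ℕ) : ℝ) * (2 * Real.log 2) ≤ (5 * k / 6) * (2 * Real.log 2) := by
        apply mul_le_mul_of_nonneg_right _ (by linarith)
        linarith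
      have h8 : (k : ℝ) * 0.69 ≤ k * Real.log 2 := by
        apply mul_le_mul_of_nonneg_left _ hk0.le; linarith
      linarith
    · intro p hp hd
      by_contra! hc
      have hpk := h p hp hd
      have := Nat.factorization_choose_of_lt_three_mul (n := n) (k := k) (p := p)
        (by omega) hpk (by omega) (by omega)
      have h1 := (hp.dvd_iff_one_le_factorization (Nat.choose_ne_zero (by omega))).1 hd
      omega
  · have h3 := log_ineq n k k (by omega) hkn (by omega) h
    push Not at c1
    have c1' : (5 : ℝ) * k < 2 * n := by exact_mod_cast c1
    have hn0 : (0 : ℝ) < n := by linarith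
    have key : ∀ c : ℝ, 0 < c → 4 * c ≤ 2 * n / k → (k : ℝ) * Real.log c ≤ (√(n : ℝ) + 1) * Real.log n := by
      intro c hc hcn
      have := Real.log_le_log (by positivity) hcn
      rw [Real.log_mul (by norm_num) hc.ne'] at this
      have := mul_le_mul_of_nonneg_left this hk0.le
      linarith
    by_cases c2 : n ≤ 4 * k
    · have c2' : (n : ℝ) ≤ 4 * k := by exact_mod_cast c2
      have h4 := key (5 / 4) (by norm_num) (by rw [le_div_iff₀ hk0]; linarith)
      have h5 := Real.one_sub_inv_le_log_of_pos (show (0 : ℝ) < 5 / 4 by norm_num)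
      have h6 := mul_le_mul_of_nonneg_left h5 hk0.le
      norm_num at h6
      linarith
    · push Not at c2
      have c2' : (4 : ℝ) * k < n := by exact_mod_cast c2
      by_cases c3 : n ≤ 12 * k
      · have c3' : (n : ℝ) ≤ 12 * k := by exact_mod_cast c3
        have h4 := key 2 (by norm_num) (by rw [le_div_iff₀ hk0]; linarith)
        have h6 := mul_le_mul_of_nonneg_left hl2.le hk0.le
        linarith
      · push Not at c3
        have c3' : (12 : ℝ) * k < n := by exact_mod_cast c3
        have h4 := key 6 (by norm_num) (by rw [le_div_iff₀ hk0]; linarith)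
        have h6 : 2.5 * Real.log 2 ≤ Real.log 6 := by
          have : Real.log (2 ^ 5) ≤ Real.log (6 ^ 2) := Real.log_le_log (by norm_num) (by norm_num)
          rw [Real.log_pow, Real.log_pow] at this
          push_cast at this
          linarith
        obtain ⟨t, ht0, ht⟩ : ∃ t : ℝ, 0 < t ∧ t ^ 6 = n := by
          refine ⟨(n : ℝ) ^ ((1 : ℝ) / 6), by positivity, ?_⟩
          rw [← Real.rpow_natCast, ← Real.rpow_mul hn0.le]; norm_num
        have ht8 : 8 ≤ t := by
          by_contra! hc
          have : t ^ 6 < 8 ^ 6 := pow_lt_pow_left₀ hc ht0.le (by norm_num)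
          rw [ht] at this
          linarith
        have hsq : √(n : ℝ) = t ^ 3 := by
          rw [← ht, show t ^ 6 = (t ^ 3) ^ 2 by ring]; exact Real.sqrt_sq (by positivity)
        have hlog : Real.log n ≤ 2.21 * t := by
          rw [← ht, Real.log_pow]
          have h7 := Real.log_le_sub_one_of_pos (show 0 < t / Real.exp 1 by positivity)
          rw [Real.log_div ht0.ne' (Real.exp_pos 1).ne', Real.log_exp] at h7
          have h8 := Real.exp_one_gt_d9
          have h9 : t / Real.exp 1 ≤ t / 2.718 := by gcongr; linarith
          have h10 : t / 2.718 ≤ t * 0.368 := by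
            rw [div_le_iff₀ (by norm_num)]; linarith
          push_cast
          linarith
        have hkt : 1.5 * t ^ 4 ≤ k := by
          have hb' : (4 : ℝ) * n ^ 2 < k ^ 3 := by exact_mod_cast hb
          rw [← ht] at hb'
          by_contra! hc
          have : (k : ℝ) ^ 3 < (1.5 * t ^ 4) ^ 3 := pow_lt_pow_left₀ hc hk0.le (by norm_num)
          have h12 : 0 < t ^ 12 := by positivity
          ring_nf at this hb'
          linarith
        have hA : 1.5 * t ^ 4 * 1.73 ≤ k * Real.log 6 := by
          apply mul_le_mul hkt (by linarith) (by norm_num) hk0.le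
        have hB : (√(n : ℝ) + 1) * Real.log n ≤ (t ^ 3 + 1) * (2.21 * t) := by
          rw [hsq]; gcongr
        have hC : t ^ 3 * t = t ^ 4 := by ring
        have h13 : 1 ≤ t ^ 3 / 512 := by
          have : (8 : ℝ) ^ 3 ≤ t ^ 3 := by gcongr
          linarith
        have h14 : t * 1 ≤ t * (t ^ 3 / 512) := mul_le_mul_of_nonneg_left h13 ht0.le
        have : 0 < t ^ 4 := by positivity
        nlinarith

theorem sylvester (n k : ℕ) (hk : 0 < k) (hkn : 2 * k ≤ n) :
    ∃ p : ℕ, p.Prime ∧ k < p ∧ p ≤ n ∧ p ∣ n.descFactorial k := by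
  have key : ¬ Smooth n k → ∃ p : ℕ, p.Prime ∧ k < p ∧ p ≤ n ∧ p ∣ n.descFactorial k := by
    intro h
    unfold Smooth at h
    push Not at h
    obtain ⟨p, hp, hd, hkp⟩ := h
    refine ⟨p, hp, hkp, ?_, ?_⟩
    · by_contra! hc
      have := Nat.factorization_choose_eq_zero_of_lt (k := k) hc
      have h1 := (hp.dvd_iff_one_le_factorization (Nat.choose_ne_zero (by omega))).1 hd
      omega
    · rw [Nat.descFactorial_eq_factorial_mul_choose]
      exact hd.mul_left _
  by_cases h1 : k < 37
  · exact key (small n k hk h1 hkn)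
  by_cases h2 : k < 2 ^ 15
  · by_cases h : Smooth n k
    · obtain ⟨q, hq, hqn, hqk⟩ := mid_range n k (by omega) h2 hkn (bound_mid n k (by omega) hkn h)
      refine ⟨q, hq, by omega, hqn, ?_⟩
      have h3 := Nat.factorial_mul_descFactorial (show k ≤ n by omega)
      have h4 : q ∣ n.factorial := hq.dvd_factorial.2 hqn
      rw [← h3] at h4
      rcases hq.dvd_mul.1 h4 with h5 | h5
      · have := hq.dvd_factorial.1 h5; omega
      · exact h5
    · exact key h
  · exact key (large n k (by omega) hkn)

/-- abstract cancellation argument -/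
theorem cancel_arg {T κ : Type*} [CommRing T] [Field κ] (R : T →+* κ[X]) (π : T)
    (hker : ∀ z, R z = 0 → π ∣ z) (hπ0 : R π = 0) (hnzd : ∀ z w, π * z = π * w → z = w)
    (m : ℕ) : ∀ (g h f : T), (R g).natDegree ≠ 0 → (R f) ≠ 0 → (R f).natDegree = 0 →
      g * h = π ^ m * f → False := by
  induction m with
  | zero =>
    intro g h f hg hf0 hf e
    have e2 : R g * R h = R f := by rw [← map_mul, e]; simp
    have : R g ≠ 0 := by rintro h0; simp [h0] at hg
    have h2 : R h ≠ 0 := by rintro h0; rw [h0, mul_zero] at e2; exact hf0 e2.symm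
    rw [← e2, natDegree_mul this h2] at hf
    omega
  | succ m ih =>
    intro g h f hg hf0 hf e
    have e2 : R g * R h = 0 := by rw [← map_mul, e]; simp [hπ0]
    have : R g ≠ 0 := by rintro h0; simp [h0] at hg
    have h2 : R h = 0 := (mul_eq_zero.1 e2).resolve_left this
    obtain ⟨h', rfl⟩ := hker h h2
    refine ih g h' f hg hf0 hf (hnzd _ _ ?_)
    linear_combination e

theorem cancel_arg2 {T κ : Type*} [CommRing T] [Field κ] (R : T →+* κ[X]) (π : T)
    (hker : ∀ z, R z = 0 → π ∣ z) (hπ0 : R π = 0) (hnzd : ∀ z w, π * z = π * w → z = w)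
    (m j : ℕ) (g h f : T) (hg : (R g).natDegree ≠ 0) (hf0 : (R f) ≠ 0)
    (hf : (R f).natDegree = 0) (e : π ^ j * g * h = π ^ m * f) : False := by
  have hp : ∀ (r : ℕ) z w, π ^ r * z = π ^ r * w → z = w := by
    intro r
    induction r with
    | zero => intro z w h; simpa using h
    | succ r ih =>
      intro z w h
      apply ih
      apply hnzd
      rw [← mul_assoc, ← mul_assoc, ← pow_succ', h]
  rcases le_or_gt j m with hjm | hjm
  · obtain ⟨d, rfl⟩ := Nat.exists_eq_add_of_le hjm
    refine cancel_arg R π hker hπ0 hnzd d g h f hg hf0 hf (hp j _ _ ?_)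
    rw [← mul_assoc, e]; ring
  · obtain ⟨d, rfl⟩ := Nat.exists_eq_add_of_le hjm
    have : π ^ (1 + d) * g * h = f := hp m _ _ (by rw [← e, Nat.succ_eq_add_one]; ring)
    apply hf0
    rw [← this, pow_add]; simp [hπ0]

theorem pow_cancel_aux {T : Type*} [CommRing T] (π z w : T) (k : ℕ) (hk : 0 < k)
    (h : π * z = π * w) : π ^ k * z = π ^ k * w := by
  obtain ⟨k', rfl⟩ : ∃ k', k = k' + 1 := ⟨k - 1, by omega⟩
  rw [pow_succ, mul_assoc, h, mul_assoc]

/-- The auxiliary ring. -/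
theorem ring_exists (p k : ℕ) [hp : Fact p.Prime] (hk : 0 < k) (φ : ℤ[X]) (hφ : φ.Monic)
    (hirr : Irreducible (φ.map (Int.castRingHom (ZMod p)))) :
    ∃ (O : Type) (_ : CommRing O) (κ : Type) (_ : Field κ) (ρ : O →+* κ) (π α : O),
      π ^ k = (p : O) ∧ ρ π = 0 ∧ (∀ z, ρ z = 0 → π ∣ z) ∧ (∀ z w, π * z = π * w → z = w) ∧
      (φ.eval₂ (Int.castRingHom O) α = 0) ∧
      (∀ f : ℤ[X], f.eval₂ (Int.castRingHom κ) (ρ α) = 0 →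
        φ.map (Int.castRingHom (ZMod p)) ∣ f.map (Int.castRingHom (ZMod p))) := by
  have : Fact (Irreducible (φ.map (Int.castRingHom (ZMod p)))) := ⟨hirr⟩
  let S := AdjoinRoot φ
  let κ := AdjoinRoot (φ.map (Int.castRingHom (ZMod p)))
  have hmon : (X ^ k - C (p : S) : S[X]).Monic := monic_X_pow_sub_C _ hk.ne'
  let O := AdjoinRoot (X ^ k - C (p : S) : S[X])
  have hc : ∀ f : ℤ[X], f.eval₂ (Int.castRingHom κ) (AdjoinRoot.root _) =
      AdjoinRoot.mk _ (f.map (Int.castRingHom (ZMod p))) := by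
    intro f
    rw [← AdjoinRoot.aeval_eq, aeval_def, eval₂_map]
    congr 1
  let σ : S →+* κ := AdjoinRoot.lift (Int.castRingHom κ) (AdjoinRoot.root _) (by
    rw [hc, AdjoinRoot.mk_self])
  have hpκ : (p : κ) = 0 := by
    have h1 : (p : κ) = AdjoinRoot.of (φ.map (Int.castRingHom (ZMod p))) ((p : ZMod p)) :=
      (map_natCast _ p).symm
    rw [h1, ZMod.natCast_self, map_zero]
  have hσp : σ (p : S) = 0 := by
    rw [map_natCast]
    exact hpκ
  have hσ : ∀ z, σ z = 0 → (p : S) ∣ z := by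
    intro z hz
    obtain ⟨f, rfl⟩ := AdjoinRoot.mk_surjective z
    have hz' : f.eval₂ (Int.castRingHom κ) (AdjoinRoot.root _) = 0 := by
      rw [← hz]; exact (AdjoinRoot.lift_mk _ _).symm
    rw [hc, AdjoinRoot.mk_eq_zero] at hz'
    obtain ⟨q, hq⟩ := hz'
    obtain ⟨q', rfl⟩ := map_surjective (Int.castRingHom (ZMod p)) (ZMod.ringHom_surjective _) q
    have h3 : (f - φ * q').map (Int.castRingHom (ZMod p)) = 0 := by
      rw [Polynomial.map_sub, Polynomial.map_mul, hq, sub_self]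
    have h4 : C (p : ℤ) ∣ f - φ * q' := by
      rw [C_dvd_iff_dvd_coeff]
      intro i
      have := congrArg (fun r => coeff r i) h3
      simp only [coeff_map, coeff_zero] at this
      exact (ZMod.intCast_zmod_eq_zero_iff_dvd _ _).1 this
    have h5 : AdjoinRoot.mk φ f = AdjoinRoot.mk φ (f - φ * q') := by
      rw [AdjoinRoot.mk_eq_mk]; simp
    rw [h5]
    obtain ⟨s, hs⟩ := h4
    refine ⟨AdjoinRoot.mk φ s, ?_⟩
    rw [hs, map_mul]
    congr 1
  let ρ : O →+* κ := AdjoinRoot.lift σ 0 (by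
    simp [hk.ne', hpκ])
  have hπk : (AdjoinRoot.root (X ^ k - C (p : S) : S[X])) ^ k = (p : O) := by
    have := AdjoinRoot.eval₂_root (X ^ k - C (p : S) : S[X])
    simp only [eval₂_sub, eval₂_pow, eval₂_X, eval₂_C] at this
    rw [sub_eq_zero] at this
    rw [this]; simp [O]
  have hρπ : ρ (AdjoinRoot.root _) = 0 := AdjoinRoot.lift_root _
  refine ⟨O, inferInstance, κ, inferInstance, ρ, AdjoinRoot.root _,
    AdjoinRoot.of _ (AdjoinRoot.root φ), hπk, hρπ, ?_, ?_, ?_, ?_⟩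
  · intro z hz
    obtain ⟨f, rfl⟩ := AdjoinRoot.mk_surjective z
    have h1 : ρ (AdjoinRoot.mk _ f) = f.eval₂ σ 0 := AdjoinRoot.lift_mk _ _
    rw [h1, eval₂_at_zero] at hz
    obtain ⟨s, hs⟩ := hσ _ hz
    rw [← f.divX_mul_X_add, hs, map_add, map_mul, AdjoinRoot.mk_X]
    refine dvd_add (dvd_mul_left _ _) ?_
    rw [C_mul, map_mul]
    refine Dvd.dvd.mul_right ?_ _
    have : (AdjoinRoot.mk (X ^ k - C (p : S) : S[X])) (C (p : S)) = (p : O) := by simp [O]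
    rw [this, ← hπk]
    exact dvd_pow_self _ hk.ne'
  · have : Module.Free ℤ S := hφ.free_adjoinRoot
    have : Module.Free S O := hmon.free_adjoinRoot
    have : Module.Free ℤ O := Module.Free.trans (S := S)
    intro z w h
    have h1 : (p : O) * z = p * w := by
      rw [← hπk]
      exact pow_cancel_aux _ z w k hk h
    have h2 : (p : ℤ) • z = (p : ℤ) • w := by simpa [zsmul_eq_mul] using h1
    exact smul_right_injective O (r := (p : ℤ)) (by exact_mod_cast hp.out.ne_zero) h2
  · have h1 := AdjoinRoot.eval₂_root φ
    have h2 := congrArg (AdjoinRoot.of (X ^ k - C (p : S) : S[X])) h1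
    rw [hom_eval₂, map_zero] at h2
    rw [← h2]
    congr 1
  · intro f hf
    have h1 : ρ (AdjoinRoot.of _ (AdjoinRoot.root φ)) = AdjoinRoot.root _ := by
      have h2 : ρ (AdjoinRoot.of _ (AdjoinRoot.root φ)) = σ (AdjoinRoot.root φ) :=
        AdjoinRoot.lift_of _
      rw [h2]; exact AdjoinRoot.lift_root _
    rw [h1, hc, AdjoinRoot.mk_eq_zero] at hf
    exact hf

theorem fac_val (p k i : ℕ) (hp : p.Prime) (hkp : k < p) (hi : 0 < i) :
    k * i.factorial.factorization p < i := by
  have h := Nat.sub_one_mul_factorization_factorial (n := i) hp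
  have h3 : 0 < (p.digits i).sum := by
    rcases Nat.eq_zero_or_pos (p.digits i).sum with h0 | h0
    · exfalso
      have h4 := Nat.modEq_digits_sum
      have h5 : ∀ d ∈ p.digits i, d = 0 := by
        intro d hd
        have := List.single_le_sum (l := p.digits i) (by simp) d hd
        omega
      have h6 := Nat.getLast_digit_ne_zero p hi.ne'
      exact h6 (h5 _ (List.getLast_mem _))
    · exact h0
  have h2 : k * i.factorial.factorization p ≤ (p - 1) * i.factorial.factorization p :=
    Nat.mul_le_mul_right _ (by omega)
  omega

theorem fac_dvd (p n i : ℕ) (hi : i ≤ n) :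
    p ^ (n.factorial.factorization p - i.factorial.factorization p) ∣
      n.factorial / i.factorial := by
  have hd : i.factorial ∣ n.factorial := Nat.factorial_dvd_factorial hi
  have := Nat.ordProj_dvd (n.factorial / i.factorial) p
  rwa [Nat.factorization_div hd] at this

theorem key (p k n : ℕ) [hp : Fact p.Prime] (hk : 0 < k) (hkp : k < p) (φ : ℤ[X])
    (hφ : φ.Monic) (hirr : Irreducible (φ.map (Int.castRingHom (ZMod p))))
    (b : ℕ → ℤ[X]) (j : ℕ) (hj : 1 ≤ j) (hjk : j ≤ k) (r s h : ℤ[X])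
    (hr : ¬ φ.map (Int.castRingHom (ZMod p)) ∣ r.map (Int.castRingHom (ZMod p)))
    (hb0 : ¬ φ.map (Int.castRingHom (ZMod p)) ∣ (b 0).map (Int.castRingHom (ZMod p)))
    (e : (φ ^ j * r + C (p : ℤ) * s) * h = ∑ i ∈ Finset.range (n + 1),
      C ((n.factorial / i.factorial : ℕ) : ℤ) * b i * φ ^ i) : False := by
  obtain ⟨O, _, κ, _, ρ, π, α, hπk, hρπ, hker, hnzd, hα, hev⟩ := ring_exists p k hk φ hφ hirr
  let R : O[X] →+* κ[X] := mapRingHom ρ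
  let E : ℤ[X] →+* O[X] := eval₂RingHom ((C : O →+* O[X]).comp (Int.castRingHom O))
    (C α + C π * X)
  have hpκ : (p : κ) = 0 := by
    rw [← map_natCast ρ, ← hπk, map_pow, hρπ, zero_pow hk.ne']
  have hRπ : R (C π) = 0 := by simp [R, hρπ]
  have hEC : ∀ z : ℤ, E (C z) = (z : O[X]) := by intro z; simp
  have hEp : E (C (p : ℤ)) = C π ^ k := by
    rw [hEC, ← C_pow, hπk]; simp
  have hRE : ∀ f, R (E f) = C (f.eval₂ (Int.castRingHom κ) (ρ α)) := by
    intro f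
    change R (f.eval₂ _ _) = _
    rw [hom_eval₂, hom_eval₂]
    congr 1
    · exact RingHom.ext_int _ _
    · simp [R, hρπ]
  have hEφ : ∃ ψ c, E φ = C π * ψ ∧ c ≠ 0 ∧ R ψ = C c * X := by
    obtain ⟨q, hq⟩ := Polynomial.binomExpansion
      (φ.map ((C : O →+* O[X]).comp (Int.castRingHom O))) (C α) (C π * X)
    have h1 : E φ = (φ.map ((C : O →+* O[X]).comp (Int.castRingHom O))).eval (C α + C π * X) := by
      rw [eval_map]; rfl
    have h2 : ∀ f : ℤ[X], (f.map ((C : O →+* O[X]).comp (Int.castRingHom O))).eval (C α) =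
        C (f.eval₂ (Int.castRingHom O) α) := by
      intro f
      rw [eval_map, hom_eval₂]
    rw [← h1, derivative_map, h2, h2, hα] at hq
    refine ⟨C (φ.derivative.eval₂ (Int.castRingHom O) α) * X + q * C π * X ^ 2,
      ρ (φ.derivative.eval₂ (Int.castRingHom O) α), ?_, ?_, ?_⟩
    · rw [hq, C_0]; ring
    · intro h0
      rw [hom_eval₂] at h0
      have h3 : ρ.comp (Int.castRingHom O) = Int.castRingHom κ := RingHom.ext_int _ _
      rw [h3] at h0
      have h4 := hev _ h0
      rw [← derivative_map] at h4
      have h5 := PerfectField.separable_of_irreducible hirr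
      exact hirr.not_isUnit (IsCoprime.isUnit_of_dvd h5 h4)
    · generalize φ.derivative.eval₂ (Int.castRingHom O) α = t
      simp [R, hρπ]
  obtain ⟨ψ, c, hψ, hc, hRψ⟩ := hEφ
  have hkerR : ∀ z, R z = 0 → C π ∣ z := by
    intro z hz
    rw [C_dvd_iff_dvd_coeff]
    intro i
    apply hker
    have := congrArg (fun q => coeff q i) hz
    simpa [R] using this
  have hnzdR : ∀ z w : O[X], C π * z = C π * w → z = w := by
    intro z w hzw
    ext i
    apply hnzd
    have := congrArg (fun q => coeff q i) hzw
    simpa using this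
  set v := n.factorial.factorization p with hv
  obtain ⟨u, hu⟩ := Nat.ordProj_dvd n.factorial p
  have hu' : ¬ p ∣ u := by
    intro hd
    obtain ⟨w, rfl⟩ := hd
    have := Nat.pow_succ_factorization_not_dvd (Nat.factorial_ne_zero n) hp.out
    apply this
    refine ⟨w, ?_⟩
    rw [pow_succ, mul_assoc]; exact hu
  have huκ : (u : κ) ≠ 0 := by
    intro h0
    have hcp : IsCoprime (u : ℤ) (p : ℤ) := by
      rw [Nat.isCoprime_iff_coprime]
      exact ((Nat.Prime.coprime_iff_not_dvd hp.out).2 hu').symm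
    obtain ⟨x, y, hxy⟩ := hcp
    have := congrArg (Int.cast : ℤ → κ) hxy
    push_cast at this
    rw [h0, hpκ] at this
    simp at this
  have hterm : ∀ i ∈ Finset.range n, C π ^ (k * v + 1) ∣
      E (C ((n.factorial / (i + 1).factorial : ℕ) : ℤ) * b (i + 1) * φ ^ (i + 1)) := by
    intro i hi
    have hi' : i + 1 ≤ n := by simpa [Nat.succ_le_iff] using hi
    obtain ⟨w, hw⟩ := fac_dvd p n (i + 1) hi'
    have h1 := fac_val p k (i + 1) hp.out hkp (Nat.succ_pos i)
    rw [map_mul, map_mul, map_pow, hψ, mul_pow, hw, hEC]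
    set vi := (i + 1).factorial.factorization p
    have h2 : (((p ^ (v - vi) * w : ℕ) : ℤ) : O[X]) = C π ^ (k * (v - vi)) * (w : O[X]) := by
      push_cast
      rw [pow_mul, ← C_pow, hπk]; simp
    rw [← hv, h2]
    have h3 : k * v + 1 ≤ k * (v - vi) + (i + 1) := by
      have : k * v ≤ k * (v - vi) + k * vi := by
        rw [← mul_add]; exact Nat.mul_le_mul_left _ (by omega)
      omega
    refine (pow_dvd_pow _ h3).trans ⟨(w : O[X]) * E (b (i + 1)) * ψ ^ (i + 1), ?_⟩
    rw [pow_add]; ring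
  obtain ⟨Z, hZ⟩ := Finset.dvd_sum hterm
  have hEF := congrArg E e
  rw [Finset.sum_range_succ', map_add E (∑ i ∈ _, _), map_sum, hZ, map_mul, map_add, map_mul,
    map_mul, map_pow, hψ, hEp] at hEF
  have h0 : E (C ((n.factorial / (0).factorial : ℕ) : ℤ) * b 0 * φ ^ 0) =
      C π ^ (k * v) * ((u : O[X]) * E (b 0)) := by
    rw [pow_zero, mul_one, map_mul, hEC, Nat.factorial_zero, Nat.div_one, hu]
    push_cast
    rw [pow_mul, ← C_pow, hπk]; simp [hv, mul_assoc]
  rw [h0] at hEF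
  have hr0 : r.eval₂ (Int.castRingHom κ) (ρ α) ≠ 0 := fun h => hr (hev _ h)
  have hb00 : (b 0).eval₂ (Int.castRingHom κ) (ρ α) ≠ 0 := fun h => hb0 (hev _ h)
  have hRf : R ((u : O[X]) * E (b 0) + C π * Z) =
      C ((u : κ) * (b 0).eval₂ (Int.castRingHom κ) (ρ α)) := by
    rw [map_add, map_mul, map_mul, hRπ, hRE, map_natCast]; simp
  have hRg : ∃ d, R (ψ ^ j * E r + C π ^ (k - j) * E s) =
      C (c ^ j * r.eval₂ (Int.castRingHom κ) (ρ α)) * X ^ j + C d := by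
    refine ⟨ρ π ^ (k - j) * s.eval₂ (Int.castRingHom κ) (ρ α), ?_⟩
    rw [map_add, map_mul, map_mul, map_pow, map_pow, hRE, hRE, hRψ]
    have : R (C π) = C (ρ π) := by simp [R]
    rw [this]
    simp only [C_mul, C_pow]; ring
  obtain ⟨d, hRg⟩ := hRg
  refine cancel_arg2 R (C π) hkerR hRπ hnzdR (k * v) j (ψ ^ j * E r + C π ^ (k - j) * E s) (E h)
    ((u : O[X]) * E (b 0) + C π * Z) ?_ ?_ ?_ ?_
  · rw [hRg, natDegree_add_C, natDegree_C_mul_X_pow _ _ (mul_ne_zero (pow_ne_zero _ hc) hr0)]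
    omega
  · rw [hRf, Ne, C_eq_zero]
    exact mul_ne_zero huκ hb00
  · rw [hRf, natDegree_C]
  · obtain ⟨l, rfl⟩ := Nat.exists_eq_add_of_le hjk
    rw [Nat.add_sub_cancel_left]
    linear_combination hEF

end Syl

/-- Step II of the proof of the main theorem: with `n ≥ 2`, `φ` monic and irreducible
modulo all primes `p ≤ n`, each `a i` of degree `< deg φ`, and `an` as well as the
content of `a 0` coprime with `n!`, the polynomial
`F = ∑_{i<n} (n!/i!)·(a i)·φ^i + an·φ^n` has no factor in `ℤ[x]` of degree in the
interval `[k·deg φ, (k+1)·deg φ)` for any integer `1 ≤ k ≤ n/2`. -/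
theorem no_medium_degree_factor (n : ℕ) (hn : 2 ≤ n) (φ : ℤ[X]) (hφmonic : φ.Monic)
    (hφirr : ∀ p : ℕ, p.Prime → p ≤ n → Irreducible (φ.map (Int.castRingHom (ZMod p))))
    (a : ℕ → ℤ[X]) (an : ℤ)
    (hdeg : ∀ i < n, (a i).degree < φ.degree)
    (han : IsCoprime an (n.factorial : ℤ))
    (ha0 : IsCoprime ((a 0).content) (n.factorial : ℤ)) :
    ∀ k : ℕ, 1 ≤ k → 2 * k ≤ n →
      ∀ g : ℤ[X], g ∣ (∑ i ∈ Finset.range n,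
            C ((n.factorial / i.factorial : ℕ) : ℤ) * a i * φ ^ i
          + C an * φ ^ n) →
        ¬ (k * φ.natDegree ≤ g.natDegree ∧
           g.natDegree < (k + 1) * φ.natDegree) := by
  intro k hk hkn g hg ⟨hg1, hg2⟩
  obtain ⟨p, hp, hkp, hpn, hpd⟩ := Syl.sylvester n k hk hkn
  have hpF : Fact p.Prime := ⟨hp⟩
  have hirr := hφirr p hp hpn
  obtain ⟨h, hgh⟩ := hg
  have hpfac : p ∣ n.factorial := (Nat.Prime.dvd_factorial hp).2 hpn
  have hpcop : ∀ z : ℤ, IsCoprime z (n.factorial : ℤ) → ¬ (p : ℤ) ∣ z := by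
    intro z hz hd
    have h1 := hz.isUnit_of_dvd' hd (Int.natCast_dvd_natCast.2 hpfac)
    rw [Int.isUnit_iff] at h1
    have := hp.two_le
    omega
  have hanp : ((an : ℤ) : ZMod p) ≠ 0 := by
    rw [Ne, ZMod.intCast_zmod_eq_zero_iff_dvd]; exact hpcop _ han
  have hmφ : (φ.map (Int.castRingHom (ZMod p))).natDegree = φ.natDegree := hφmonic.natDegree_map _
  have hm : 0 < φ.natDegree := by rw [← hmφ]; exact hirr.natDegree_pos
  have han0 : an ≠ 0 := by rintro rfl; simp at hanp
  have hdφ : φ.degree = φ.natDegree := degree_eq_natDegree hφmonic.ne_zero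
  have hlow : (∑ i ∈ Finset.range n, C ((n.factorial / i.factorial : ℕ) : ℤ) * a i * φ ^ i).degree
      < (C an * φ ^ n).degree := by
    have h1 : (C an * φ ^ n).degree = ((n * φ.natDegree : ℕ) : WithBot ℕ) := by
      rw [degree_C_mul han0, degree_pow, hdφ]; simp
    rw [h1]
    refine (degree_sum_le _ _).trans_lt ?_
    rw [Finset.sup_lt_iff (WithBot.bot_lt_coe _)]
    intro i hi
    have hi' : i < n := Finset.mem_range.1 hi
    by_cases h0 : C ((n.factorial / i.factorial : ℕ) : ℤ) * a i * φ ^ i = 0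
    · rw [h0, degree_zero]; exact WithBot.bot_lt_coe _
    have ha : a i ≠ 0 := by rintro h; simp [h] at h0
    have hlt : (a i).natDegree < φ.natDegree := natDegree_lt_natDegree ha (hdeg i hi')
    refine (degree_le_natDegree).trans_lt ?_
    rw [Nat.cast_lt]
    have h2 : (C ((n.factorial / i.factorial : ℕ) : ℤ) * a i * φ ^ i).natDegree
        ≤ (a i).natDegree + i * φ.natDegree := by
      refine natDegree_mul_le.trans ?_
      exact Nat.add_le_add (natDegree_C_mul_le _ _) natDegree_pow_le
    have h3 : (i + 1) * φ.natDegree ≤ n * φ.natDegree := Nat.mul_le_mul_right _ hi'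
    rw [add_mul, one_mul] at h3
    omega
  set F := ∑ i ∈ Finset.range n, C ((n.factorial / i.factorial : ℕ) : ℤ) * a i * φ ^ i
    + C an * φ ^ n with hF
  have hFlc : F.leadingCoeff = an := by
    rw [hF, leadingCoeff_add_of_degree_lt hlow, leadingCoeff_mul, leadingCoeff_C,
      leadingCoeff_pow, hφmonic.leadingCoeff]; simp
  have hFdeg : F.natDegree = n * φ.natDegree := by
    rw [hF, natDegree_add_eq_right_of_degree_lt hlow, natDegree_C_mul han0, natDegree_pow]
  have hFmap : (F.map (Int.castRingHom (ZMod p))).natDegree = n * φ.natDegree := by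
    rw [natDegree_map_of_leadingCoeff_ne_zero, hFdeg]
    rw [hFlc]; simpa using hanp
  have hF0 : F.map (Int.castRingHom (ZMod p)) ≠ 0 := by
    intro h0
    rw [h0, natDegree_zero] at hFmap
    have : 0 < n * φ.natDegree := by positivity
    omega
  have hgmap : (g.map (Int.castRingHom (ZMod p))).natDegree = g.natDegree := by
    apply natDegree_map_of_leadingCoeff_ne_zero
    intro h0
    have h1 : F.leadingCoeff = g.leadingCoeff * h.leadingCoeff := by rw [hgh, leadingCoeff_mul]
    have h2 := congrArg (Int.castRingHom (ZMod p)) h1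
    rw [map_mul, h0, zero_mul, hFlc] at h2
    exact hanp (by simpa using h2)
  have hg0 : g.map (Int.castRingHom (ZMod p)) ≠ 0 := by
    intro h0
    apply hF0
    rw [hgh, Polynomial.map_mul, h0, zero_mul]
  have hpi : ∀ i, i ≤ n - k → p ∣ n.factorial / i.factorial := by
    intro i hi
    have h1 := Nat.factorial_mul_descFactorial (show k ≤ n by omega)
    obtain ⟨w, hw⟩ := Nat.factorial_dvd_factorial hi
    rw [← h1, hw, mul_assoc, Nat.mul_div_cancel_left _ (Nat.factorial_pos i)]
    exact hpd.mul_left _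
  have hFdvd : φ.map (Int.castRingHom (ZMod p)) ^ (n - k + 1) ∣
      F.map (Int.castRingHom (ZMod p)) := by
    rw [hF, Polynomial.map_add, Polynomial.map_sum]
    refine dvd_add (Finset.dvd_sum ?_) ?_
    · intro i hi
      rw [Polynomial.map_mul, Polynomial.map_mul, Polynomial.map_pow, map_C]
      rcases le_or_gt i (n - k) with hle | hgt
      · have : ((Int.castRingHom (ZMod p)) ((n.factorial / i.factorial : ℕ) : ℤ)) = 0 := by
          rw [eq_intCast, ZMod.intCast_zmod_eq_zero_iff_dvd]
          exact Int.natCast_dvd_natCast.2 (hpi i hle)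
        rw [this]; simp
      · exact (pow_dvd_pow _ hgt).mul_left _
    · rw [Polynomial.map_mul, Polynomial.map_pow]
      exact (pow_dvd_pow _ (by omega)).mul_left _
  have hdvdg : φ.map (Int.castRingHom (ZMod p)) ∣ g.map (Int.castRingHom (ZMod p)) := by
    by_contra hnd
    have hcop := ((hirr.coprime_iff_not_dvd).2 hnd).pow_left (m := n - k + 1)
    obtain ⟨H, hH⟩ := hFdvd
    have h1 : g.map (Int.castRingHom (ZMod p)) ∣ H := by
      apply hcop.symm.dvd_of_dvd_mul_left
      rw [← hH, hgh, Polynomial.map_mul]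
      exact dvd_mul_right _ _
    have hH0 : H ≠ 0 := by rintro rfl; rw [mul_zero] at hH; exact hF0 hH
    have h2 := natDegree_le_of_dvd h1 hH0
    have h3 := hFmap
    rw [hH, natDegree_mul (pow_ne_zero _ hirr.ne_zero) hH0, natDegree_pow, hmφ] at h3
    rw [hgmap] at h2
    have h4 : n * φ.natDegree < (n - k + 1) * φ.natDegree + k * φ.natDegree := by
      rw [← add_mul]
      exact Nat.mul_lt_mul_of_pos_right (by omega) hm
    omega
  have hfin : FiniteMultiplicity (φ.map (Int.castRingHom (ZMod p)))
      (g.map (Int.castRingHom (ZMod p))) := FiniteMultiplicity.of_not_isUnit hirr.not_isUnit hg0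
  obtain ⟨r', hr', hnr⟩ := hfin.exists_eq_pow_mul_and_not_dvd
  set j := multiplicity (φ.map (Int.castRingHom (ZMod p))) (g.map (Int.castRingHom (ZMod p)))
    with hjdef
  have hj1 : 1 ≤ j := by
    rcases Nat.eq_zero_or_pos j with h0 | h0
    · rw [h0, pow_zero, one_mul] at hr'
      exact absurd (hr' ▸ hdvdg) hnr
    · exact h0
  have hjk : j ≤ k := by
    have hr0 : r' ≠ 0 := by rintro rfl; simp at hnr
    have h1 := hgmap
    rw [hr', natDegree_mul (pow_ne_zero _ hirr.ne_zero) hr0, natDegree_pow, hmφ] at h1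
    by_contra hlt
    have h2 : (k + 1) * φ.natDegree ≤ j * φ.natDegree := Nat.mul_le_mul_right _ (by omega)
    omega
  obtain ⟨r, rfl⟩ := map_surjective (Int.castRingHom (ZMod p)) (ZMod.ringHom_surjective _) r'
  have hcong : ∀ f : ℤ[X], f.map (Int.castRingHom (ZMod p)) = 0 → C (p : ℤ) ∣ f := by
    intro f hf
    rw [C_dvd_iff_dvd_coeff]
    intro i
    have := congrArg (fun r => coeff r i) hf
    simp only [coeff_map, coeff_zero] at this
    exact (ZMod.intCast_zmod_eq_zero_iff_dvd _ _).1 this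
  obtain ⟨s, hs⟩ := hcong (g - φ ^ j * r) (by
    rw [Polynomial.map_sub, Polynomial.map_mul, Polynomial.map_pow, sub_eq_zero]; exact hr')
  have hgs : g = φ ^ j * r + C (p : ℤ) * s := by rw [← hs]; ring
  have ha00 : ¬ φ.map (Int.castRingHom (ZMod p)) ∣ (a 0).map (Int.castRingHom (ZMod p)) := by
    intro hd
    have h1 : (a 0).map (Int.castRingHom (ZMod p)) = 0 := by
      apply eq_zero_of_dvd_of_degree_lt hd
      refine degree_map_le.trans_lt ?_
      rw [hφmonic.degree_map]
      exact hdeg 0 (by omega)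
    exact hpcop _ ha0 (dvd_content_iff_C_dvd.2 (hcong _ h1))
  refine Syl.key p k n hk hkp φ hφmonic hirr (fun i => if i < n then a i else C an) j hj1 hjk r s h
    hnr ?_ ?_
  · rw [if_pos (by omega)]; exact ha00
  · rw [← hgs, ← hgh, hF, Finset.sum_range_succ]
    congr 1
    · refine Finset.sum_congr rfl ?_
      intro i hi
      rw [if_pos (Finset.mem_range.1 hi)]
    · rw [if_neg (lt_irrefl _), Nat.div_self (Nat.factorial_pos n)]; simp
end

section
/- Let p be a prime and let φ ∈ ℤ[x] be a monic polynomial whose reduction φ̄ modulo p is irreducible in 𝔽_p[x]. Let g, h ∈ ℤ[x] be polynomials neither of which is divisible by φ(x) in ℤ[x] and whose leading coefficients are not divisible by p. Let t, u, w be the largest indices of nonzero terms in the φ-expansions of g, h and g·h respectively, and let α, β, γ denote the multiplicities of φ̄ as a factor in 𝔽_p[x] of the reductions modulo p of g, h and g·h respectively. Then w − γ equals either (t − α) + (u − β) or (t − α) + (u − β) + 1. (This expresses that the length of the slope-zero edge of the φ-Newton polygon of g·h with respect to p either equals the sum of the lengths of the slope-zero edges of the φ-Newton polygons of g and h, or exceeds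 that sum by one.) -/
open Polynomial

lemma expansion_sum_degree (φ : ℤ[X]) (hφ : φ.Monic) (c : ℕ → ℤ[X])
    (hc : ∀ i, (c i).degree < φ.degree) (n : ℕ) :
    (∑ i ∈ Finset.range n, c i * φ ^ i).degree < ((n * φ.natDegree : ℕ) : WithBot ℕ) := by
  induction n with
  | zero => simp
  | succ n ih =>
    rw [Finset.sum_range_succ]
    refine lt_of_le_of_lt (degree_add_le _ _) (max_lt ?_ ?_)
    · refine lt_of_lt_of_le ih ?_
      exact_mod_cast Nat.mul_le_mul_right _ (Nat.le_succ n)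
    · by_cases h0 : c n = 0
      · rw [h0, zero_mul, degree_zero]
        exact WithBot.bot_lt_coe _
      · have h1 := natDegree_lt_natDegree h0 (hc n)
        refine lt_of_le_of_lt degree_le_natDegree ?_
        rw [natDegree_mul h0 (hφ.pow n).ne_zero, hφ.natDegree_pow]
        norm_cast
        nlinarith

lemma expansion_natDegree (φ : ℤ[X]) (hφ : φ.Monic) (c : ℕ → ℤ[X])
    (hc : ∀ i, (c i).degree < φ.degree) (n : ℕ) (f : ℤ[X])
    (hf : f = ∑ i ∈ Finset.range (n + 1), c i * φ ^ i) (hn : c n ≠ 0) :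
    n * φ.natDegree ≤ f.natDegree ∧ f.natDegree < (n + 1) * φ.natDegree := by
  have h1 := natDegree_lt_natDegree hn (hc n)
  have h2 : (c n * φ ^ n).natDegree = (c n).natDegree + n * φ.natDegree := by
    rw [natDegree_mul hn (hφ.pow n).ne_zero, hφ.natDegree_pow]
  have h3 : c n * φ ^ n ≠ 0 := mul_ne_zero hn (hφ.pow n).ne_zero
  have h4 : f.natDegree = (c n).natDegree + n * φ.natDegree := by
    rw [← h2, hf, Finset.sum_range_succ]
    apply natDegree_add_eq_right_of_degree_lt
    refine lt_of_lt_of_le (expansion_sum_degree φ hφ c hc n) ?_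
    rw [degree_eq_natDegree h3, h2]
    norm_cast
    omega
  rw [h4]
  constructor
  · omega
  · nlinarith

/-- Lemma 3.A(ii). Let `p` be prime, `φ ∈ ℤ[x]` monic with irreducible reduction `φ̄`
mod `p`, and let `g, h ∈ ℤ[x]` be not divisible by `φ` and with leading coefficients
not divisible by `p`. If `t, u, w` are the top indices of the `φ`-expansions of
`g, h, g·h` and `α, β, γ` the multiplicities of `φ̄` in the reductions of `g, h, g·h`,
then `w - γ` equals `(t - α) + (u - β)` or `(t - α) + (u - β) + 1`. -/
theorem slope_zero_edge_length (p : ℕ) (hp : p.Prime) (φ g h : ℤ[X]) (hφmonic : φ.Monic)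
    (hφirr : Irreducible (φ.map (Int.castRingHom (ZMod p))))
    (hφg : ¬ φ ∣ g) (hφh : ¬ φ ∣ h)
    (hglc : ¬ (p : ℤ) ∣ g.leadingCoeff) (hhlc : ¬ (p : ℤ) ∣ h.leadingCoeff)
    (t u w : ℕ) (gc hc wc : ℕ → ℤ[X])
    (hgexp : g = ∑ i ∈ Finset.range (t + 1), gc i * φ ^ i)
    (hgdeg : ∀ i, (gc i).degree < φ.degree) (hgt : gc t ≠ 0)
    (hhexp : h = ∑ i ∈ Finset.range (u + 1), hc i * φ ^ i)
    (hhdeg : ∀ i, (hc i).degree < φ.degree) (hhu : hc u ≠ 0)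
    (hwexp : g * h = ∑ i ∈ Finset.range (w + 1), wc i * φ ^ i)
    (hwdeg : ∀ i, (wc i).degree < φ.degree) (hww : wc w ≠ 0)
    (α β γ : ℕ)
    (hα : (φ.map (Int.castRingHom (ZMod p))) ^ α ∣ g.map (Int.castRingHom (ZMod p)) ∧
      ¬ (φ.map (Int.castRingHom (ZMod p))) ^ (α + 1) ∣ g.map (Int.castRingHom (ZMod p)))
    (hβ : (φ.map (Int.castRingHom (ZMod p))) ^ β ∣ h.map (Int.castRingHom (ZMod p)) ∧
      ¬ (φ.map (Int.castRingHom (ZMod p))) ^ (β + 1) ∣ h.map (Int.castRingHom (ZMod p)))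
    (hγ : (φ.map (Int.castRingHom (ZMod p))) ^ γ ∣ (g * h).map (Int.castRingHom (ZMod p)) ∧
      ¬ (φ.map (Int.castRingHom (ZMod p))) ^ (γ + 1) ∣ (g * h).map (Int.castRingHom (ZMod p))) :
    (w : ℤ) - (γ : ℤ) = ((t : ℤ) - (α : ℤ)) + ((u : ℤ) - (β : ℤ)) ∨
    (w : ℤ) - (γ : ℤ) = ((t : ℤ) - (α : ℤ)) + ((u : ℤ) - (β : ℤ)) + 1 := by
  have hg0 : g ≠ 0 := fun h0 => hφg (h0 ▸ dvd_zero φ)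
  have hh0 : h ≠ 0 := fun h0 => hφh (h0 ▸ dvd_zero φ)
  obtain ⟨a1, a2⟩ := expansion_natDegree φ hφmonic gc hgdeg t g hgexp hgt
  obtain ⟨b1, b2⟩ := expansion_natDegree φ hφmonic hc hhdeg u h hhexp hhu
  obtain ⟨c1, c2⟩ := expansion_natDegree φ hφmonic wc hwdeg w (g * h) hwexp hww
  rw [natDegree_mul hg0 hh0] at c1 c2
  have hw1 : t + u < w + 1 := by
    refine lt_of_mul_lt_mul_right (a := φ.natDegree) ?_ (Nat.zero_le _)
    nlinarith
  have hw2 : w < t + u + 2 := by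
    refine lt_of_mul_lt_mul_right (a := φ.natDegree) ?_ (Nat.zero_le _)
    nlinarith
  haveI : Fact p.Prime := ⟨hp⟩
  have e := emultiplicity_mul hφirr.prime (a := g.map (Int.castRingHom (ZMod p)))
    (b := h.map (Int.castRingHom (ZMod p)))
  rw [← Polynomial.map_mul, emultiplicity_eq_coe.2 hα, emultiplicity_eq_coe.2 hβ,
    emultiplicity_eq_coe.2 hγ] at e
  have e' : γ = α + β := by exact_mod_cast e
  omega
end

section
/- Let R be a discrete valuation ring with normalized additive valuation v (with value group ℤ) and residue field κ. Let n, k, ℓ be integers with 0 ≤ ℓ < k ≤ n/2. Let φ ∈ R[x] be a monic polynomial whose image in κ[x] is irreducible. Let f ∈ R[x] be a monic polynomial not divisible by φ(x) in R[x], with φ-expansion f = Σ_{i=0}^{n} f_i(x)·φ(x)^i and f_n(x) ≠ 0. For nonzero g ∈ R[x], write v^x(g) for the minimum of v over the coefficients of g. Assume: (1) v^x(f_i) > 0 for all 0 ≤ i ≤ n−ℓ−1; (2) f_0 ≠ 0 and for every index j with 1 ≤ j ≤ n and f_j ≠ 0 one has k·(v^x(f_0) − v^x(f_j)) < j. Let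 a_0(x), …, a_n(x) ∈ R[x] satisfy: (i) deg a_i < deg φ − deg f_i for 0 ≤ i ≤ n; (ii) v^x(a_0) = 0; (iii) the leading coefficient of a_n is a unit of R. Then the polynomial Σ_{i=0}^{n} a_i(x)·f_i(x)·φ(x)^i has no factor in R[x] whose degree lies in the interval [(ℓ+1)·deg φ, (k+1)·deg φ). -/
open Polynomial

/-- The Gaussian valuation `v^x` of a polynomial over a local ring `R`: the largest `m`
such that every coefficient lies in the `m`-th power of the maximal ideal. For a discrete
valuation ring this is the minimum of the valuations of the coefficients. -/
noncomputable def vxDVR (R : Type*) [CommRing R] [IsLocalRing R] (g : Polynomial R) : ℕ :=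
  sSup {m : ℕ | ∀ j, g.coeff j ∈ (IsLocalRing.maximalIdeal R) ^ m}

namespace Fil

noncomputable def E {R : Type*} [CommRing R] (φ : R[X]) : ℕ → R[X] → R[X]
  | 0, p => p %ₘ φ
  | (m + 1), p => E φ m (p /ₘ φ)

section
variable {R : Type*} [CommRing R] [Nontrivial R] {φ : R[X]}

lemma add_div (hφ : φ.Monic) (p q : R[X]) : (p + q) /ₘ φ = p /ₘ φ + q /ₘ φ := by
  refine (div_modByMonic_unique _ (p %ₘ φ + q %ₘ φ) hφ ⟨?_, ?_⟩).1
  · have h1 := modByMonic_add_div p φ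
    have h2 := modByMonic_add_div q φ
    linear_combination h1 + h2
  · exact (degree_add_le _ _).trans_lt
      (max_lt (degree_modByMonic_lt _ hφ) (degree_modByMonic_lt _ hφ))

lemma C_mul_divmod (hφ : φ.Monic) (c : R) (p : R[X]) :
    (C c * p) /ₘ φ = C c * (p /ₘ φ) ∧ (C c * p) %ₘ φ = C c * (p %ₘ φ) := by
  refine div_modByMonic_unique _ _ hφ ⟨?_, ?_⟩
  · have h1 := modByMonic_add_div p φ
    linear_combination C c * h1
  · rw [← smul_eq_C_mul]
    exact (degree_smul_le _ _).trans_lt (degree_modByMonic_lt _ hφ)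

lemma E_add (hφ : φ.Monic) (m : ℕ) : ∀ p q, E φ m (p + q) = E φ m p + E φ m q := by
  induction m with
  | zero => intro p q; simp [E, add_modByMonic]
  | succ m ih => intro p q; simp [E, add_div hφ, ih]

lemma E_zero (m : ℕ) : E φ m 0 = 0 := by
  induction m with
  | zero => simp [E]
  | succ m ih => simp [E, ih]

lemma E_sum (hφ : φ.Monic) (m : ℕ) {ι : Type*} (s : Finset ι) (p : ι → R[X]) :
    E φ m (∑ i ∈ s, p i) = ∑ i ∈ s, E φ m (p i) := by
  classical
  induction s using Finset.induction_on with
  | empty => simp [E_zero]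
  | insert a s ha ih => rw [Finset.sum_insert ha, Finset.sum_insert ha, E_add hφ, ih]

lemma E_C_mul (hφ : φ.Monic) (c : R) (m : ℕ) : ∀ p, E φ m (C c * p) = C c * E φ m p := by
  induction m with
  | zero => intro p; exact (C_mul_divmod hφ c p).2
  | succ m ih => intro p; simp [E, (C_mul_divmod hφ c p).1, ih]

lemma E_dvd (hφ : φ.Monic) (c : R) (m : ℕ) (p : R[X]) (s : ℕ) (h : C c ^ s ∣ p) :
    C c ^ s ∣ E φ m p := by
  obtain ⟨q, rfl⟩ := h
  rw [← C_pow, E_C_mul hφ]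
  exact dvd_mul_right _ _

lemma E_add_pow (hφ : φ.Monic) (i m : ℕ) (p : R[X]) : E φ (i + m) (p * φ ^ i) = E φ m p := by
  induction i with
  | zero => simp
  | succ i ih =>
    rw [show i + 1 + m = (i + m) + 1 by ring, E, show p * φ ^ (i+1) = φ * (p * φ ^ i) by ring,
      mul_divByMonic_cancel_left _ hφ, ih]

lemma E_lt_pow (hφ : φ.Monic) (m i : ℕ) (h : m < i) (p : R[X]) : E φ m (p * φ ^ i) = 0 := by
  obtain ⟨j, rfl⟩ := Nat.exists_eq_add_of_lt h
  rw [show p * φ ^ (m + j + 1) = (p * φ ^ (j+1)) * φ ^ m by ring]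
  have := E_add_pow hφ m 0 (p * φ ^ (j+1))
  rw [add_zero] at this
  rw [this, E, modByMonic_eq_zero_iff_dvd hφ]
  exact ⟨p * φ ^ j, by ring⟩

lemma E_small (hφ : φ.Monic) (m : ℕ) (p : R[X]) (h : p.degree < φ.degree) :
    E φ m p = if m = 0 then p else 0 := by
  cases m with
  | zero => simpa [E] using (modByMonic_eq_self_iff hφ).2 h
  | succ m => simp [E, (divByMonic_eq_zero_iff hφ).2 h, E_zero]

lemma E_expansion (hφ : φ.Monic) (N m : ℕ) (c : ℕ → R[X])
    (hc : ∀ i < N, (c i).degree < φ.degree) :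
    E φ m (∑ i ∈ Finset.range N, c i * φ ^ i) = if m < N then c m else 0 := by
  rw [E_sum hφ]
  have : ∀ i ∈ Finset.range N, E φ m (c i * φ ^ i) = if m = i then c i else 0 := by
    intro i hi
    rcases lt_or_ge m i with h | h
    · rw [E_lt_pow hφ _ _ h, if_neg h.ne]
    · obtain ⟨j, rfl⟩ := Nat.exists_eq_add_of_le h
      rw [E_add_pow hφ, E_small hφ _ _ (hc i (Finset.mem_range.1 hi))]
      simp
  rw [Finset.sum_congr rfl this, Finset.sum_ite_eq]
  simp

lemma exists_expansion (hφ : φ.Monic) (N : ℕ) : ∀ p : R[X],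
    (p = 0 ∨ p.natDegree < N * φ.natDegree) → ∃ c : ℕ → R[X],
    (∀ i, (c i).degree < φ.degree) ∧ p = ∑ i ∈ Finset.range N, c i * φ ^ i := by
  have hdeg0 : (0 : R[X]).degree < φ.degree := by
    rw [degree_zero, bot_lt_iff_ne_bot, Ne, degree_eq_bot]; exact hφ.ne_zero
  induction N with
  | zero =>
    intro p hp
    refine ⟨fun _ => 0, fun _ => hdeg0, ?_⟩
    simpa using hp
  | succ N ih =>
    intro p hp
    obtain ⟨c, hc, hq⟩ := ih (p /ₘ φ) (by
      by_cases h : p /ₘ φ = 0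
      · exact Or.inl h
      · right
        have h2 : p ≠ 0 := by rintro rfl; simp at h
        rw [natDegree_divByMonic _ hφ]
        have h3 := hp.resolve_left h2
        rw [divByMonic_eq_zero_iff hφ, not_lt] at h
        have h4 := natDegree_le_natDegree h
        have : (N+1) * φ.natDegree = N * φ.natDegree + φ.natDegree := by ring
        omega)
    refine ⟨fun i => Nat.casesOn i (p %ₘ φ) c, ?_, ?_⟩
    · intro i; cases i with
      | zero => exact degree_modByMonic_lt _ hφ
      | succ i => exact hc i
    · rw [Finset.sum_range_succ']
      have h := modByMonic_add_div p φ
      have : ∑ i ∈ Finset.range N, c i * φ ^ (i+1) = φ * (p /ₘ φ) := by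
        rw [hq, Finset.mul_sum]; exact Finset.sum_congr rfl fun i _ => by ring
      simp only [this]
      linear_combination -h

end

lemma exists_last_min (s : Finset ℕ) (hs : s.Nonempty) (u : ℕ → ℕ∞) :
    ∃ α ∈ s, ∀ i ∈ s, u α ≤ u i ∧ (α < i → u α < u i) := by
  obtain ⟨b, hb, hmin⟩ := Finset.exists_min_image s u hs
  obtain ⟨α, hα, hmax⟩ := Finset.exists_max_image (s.filter (fun i => u i = u b)) id
    ⟨b, by simp [hb]⟩
  simp only [Finset.mem_filter, id] at hα hmax
  refine ⟨α, hα.1, fun i hi => ⟨hα.2 ▸ hmin i hi, fun h => ?_⟩⟩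
  refine lt_of_le_of_ne (hα.2 ▸ hmin i hi) fun he => ?_
  have := hmax i ⟨hi, he ▸ hα.2⟩
  omega

section
variable {R : Type*} [CommRing R] [IsDomain R] [IsDiscreteValuationRing R]

lemma C_dvd_iff {π : R} (hπ : Irreducible π) (p : R[X]) :
    C π ∣ p ↔ p.map (IsLocalRing.residue R) = 0 := by
  rw [C_dvd_iff_dvd_coeff, Polynomial.ext_iff]
  refine forall_congr' fun i => ?_
  rw [coeff_map, coeff_zero, IsLocalRing.residue_eq_zero_iff, hπ.maximalIdeal_eq,
    Ideal.mem_span_singleton]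

lemma mem_pow_iff {π : R} (hπ : Irreducible π) (p : R[X]) (m : ℕ) :
    (∀ j, p.coeff j ∈ (IsLocalRing.maximalIdeal R) ^ m) ↔ C π ^ m ∣ p := by
  rw [← C_pow, C_dvd_iff_dvd_coeff]
  refine forall_congr' fun i => ?_
  rw [hπ.maximalIdeal_eq, Ideal.span_singleton_pow, Ideal.mem_span_singleton]

lemma primeC {π : R} (hπ : Irreducible π) : Prime (C π : R[X]) :=
  Polynomial.prime_C_iff.2 hπ.prime

lemma finC {π : R} (hπ : Irreducible π) {p : R[X]} (hp : p ≠ 0) :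
    FiniteMultiplicity (C π) p := by
  apply FiniteMultiplicity.of_prime_left (primeC hπ) hp

lemma vx_eq {π : R} (hπ : Irreducible π) {p : R[X]} (hp : p ≠ 0) :
    (vxDVR R p : ℕ∞) = emultiplicity (C π) p := by
  have hf := finC hπ hp
  rw [hf.emultiplicity_eq_multiplicity]
  congr 1
  unfold vxDVR
  have : {m : ℕ | ∀ j, p.coeff j ∈ (IsLocalRing.maximalIdeal R) ^ m}
      = Set.Iic (multiplicity (C π) p) := by
    ext m
    rw [Set.mem_ofPred_eq, mem_pow_iff hπ, Set.mem_Iic, hf.pow_dvd_iff_le_multiplicity]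
  rw [this, csSup_Iic]

lemma not_dvd_mod {π : R} (hπ : Irreducible π) {φ : R[X]} (hφ : φ.Monic)
    (hirr : Irreducible (φ.map (IsLocalRing.residue R))) (p q : R[X])
    (hp : p.degree < φ.degree) (hq : q.degree < φ.degree) (s t : ℕ)
    (hs : emultiplicity (C π) p = s) (ht : emultiplicity (C π) q = t) :
    ¬ C π ^ (s + t + 1) ∣ (p * q) %ₘ φ := by
  have key : ∀ (p : R[X]) (s : ℕ), p.degree < φ.degree → emultiplicity (C π) p = s →
      ∃ p', p = C (π ^ s) * p' ∧ ¬ φ.map (IsLocalRing.residue R) ∣ p'.map (IsLocalRing.residue R) := by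
    intro p s hp hs
    obtain ⟨⟨p', rfl⟩, h2⟩ := emultiplicity_eq_coe.1 hs
    refine ⟨p', by rw [C_pow], fun h => ?_⟩
    have hne : p'.map (IsLocalRing.residue R) ≠ 0 := by
      intro h0
      obtain ⟨r, rfl⟩ := (C_dvd_iff hπ p').2 h0
      exact h2 ⟨r, by ring⟩
    have h3 := degree_le_of_dvd h hne
    rw [hφ.degree_map] at h3
    have h4 : (p'.map (IsLocalRing.residue R)).degree ≤ p'.degree := degree_map_le
    rw [← C_pow, degree_mul, degree_C (pow_ne_zero _ hπ.ne_zero), zero_add] at hp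
    exact absurd (h3.trans h4) (not_le.2 hp)
  obtain ⟨p', rfl, hp'⟩ := key p s hp hs
  obtain ⟨q', rfl, hq'⟩ := key q t hq ht
  rintro ⟨r, hr⟩
  rw [show C (π ^ s) * p' * (C (π ^ t) * q') = C (π ^ (s+t)) * (p' * q') by
    rw [pow_add, C_mul]; ring, (C_mul_divmod hφ _ _).2, pow_succ, ← C_pow, mul_assoc] at hr
  have h := mul_left_cancel₀ (C_ne_zero.2 (pow_ne_zero _ hπ.ne_zero)) hr
  have h0 := (C_dvd_iff hπ _).1 ⟨r, h⟩
  rw [map_modByMonic _ hφ, modByMonic_eq_zero_iff_dvd (hφ.map _), Polynomial.map_mul] at h0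
  rcases hirr.prime.dvd_or_dvd h0 with h | h
  · exact hp' h
  · exact hq' h

end

end Fil

namespace Fil

lemma core {R : Type*} [CommRing R] [IsDomain R] [IsDiscreteValuationRing R]
    {π : R} (hπ : Irreducible π) {φ : R[X]} (hφ : φ.Monic)
    (hirr : Irreducible (φ.map (IsLocalRing.residue R))) (k : ℕ) (hk : 0 < k) (A B : ℕ)
    (g h : ℕ → R[X]) (hg : ∀ i, (g i).degree < φ.degree) (hh : ∀ i, (h i).degree < φ.degree)
    (hA : 0 < A) (hB : 0 < B) (F : R[X])
    (hF : F = (∑ i ∈ Finset.range A, g i * φ ^ i) * (∑ i ∈ Finset.range B, h i * φ ^ i))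
    (hF0 : E φ 0 F ≠ 0) (t : ℕ) (htA : t < A) (htk : t ≤ k) (ht : ¬ C π ∣ g t) (h0 : C π ∣ g 0) :
    ∃ m, 1 ≤ m ∧ ∃ s e : ℕ, ¬ C π ^ (s + 1) ∣ E φ m F ∧ C π ^ e ∣ E φ 0 F ∧
      k * s + m ≤ k * e := by
  have hFs : ∀ m, E φ m F = ∑ x ∈ Finset.range A ×ˢ Finset.range B,
      E φ m ((g x.1 * h x.2) * φ ^ (x.1 + x.2)) := by
    intro m
    rw [hF, Finset.sum_mul_sum, ← Finset.sum_product', E_sum hφ]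
    exact Finset.sum_congr rfl fun x _ => by congr 1; ring
  have hF0' : E φ 0 F = (g 0 * h 0) %ₘ φ := by
    rw [hFs, Finset.sum_eq_single (0, 0)]
    · simp [E]
    · rintro ⟨i, j⟩ _ hne
      apply E_lt_pow hφ
      have : ¬ (i = 0 ∧ j = 0) := by simpa using hne
      simp only
      omega
    · simp [hA, hB]
  have hg0 : g 0 ≠ 0 := by intro h; apply hF0; rw [hF0', h]; simp
  have hh0 : h 0 ≠ 0 := by intro h; apply hF0; rw [hF0', h]; simp
  set V : R[X] → ℕ∞ := fun p => emultiplicity (C π) p with hV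
  have hfin : ∀ p : R[X], p ≠ 0 → ∃ x : ℕ, V p = x := fun p hp =>
    ⟨_, (finC hπ hp).emultiplicity_eq_multiplicity⟩
  obtain ⟨x0, hx0⟩ := hfin _ hg0
  obtain ⟨y0, hy0⟩ := hfin _ hh0
  have key : ∀ (N : ℕ) (p : ℕ → R[X]) (z : ℕ), 0 < N → V (p 0) = z →
      ∃ α < N, ∃ s : ℕ, V (p α) = s ∧ k * s + α ≤ k * z ∧
      ∀ i < N, ∀ x : ℕ, V (p i) = x → k * s + α ≤ k * x + i ∧ (α < i → k * s + α < k * x + i) := by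
    intro N p z hN hz
    obtain ⟨α, hα, hm⟩ := exists_last_min (Finset.range N) ⟨0, by simpa using hN⟩
      (fun i => k * V (p i) + i)
    have h1 := (hm 0 (by simpa using hN)).1
    have hs : ∃ s : ℕ, V (p α) = s := by
      by_cases hp : p α = 0
      · exfalso
        have : V (p α) = ⊤ := by rw [hp]; simp [hV]
        simp only [this, hz] at h1
        rw [ENat.mul_top (by exact_mod_cast hk.ne'), top_add, top_le_iff] at h1
        have h2 : ((k * z + 0 : ℕ) : ℕ∞) = ⊤ := by push_cast; exact_mod_cast h1
        exact ENat.coe_ne_top _ h2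
      · exact hfin _ hp
    obtain ⟨s, hs⟩ := hs
    refine ⟨α, by simpa using hα, s, hs, ?_, ?_⟩
    · simp only [hs, hz] at h1
      have := (by exact_mod_cast h1 : k * s + α ≤ k * z + 0)
      simpa using this
    · intro i hi x hx
      have h2 := hm i (by simpa using hi)
      simp only [hs, hx] at h2
      exact_mod_cast h2
  obtain ⟨α, hα, s1, hs1, hz1, hm1⟩ := key A g x0 hA hx0
  obtain ⟨β, hβ, s2, hs2, hz2, hm2⟩ := key B h y0 hB hy0
  have hVt : V (g t) = (0 : ℕ) := by
    simpa [hV] using emultiplicity_eq_zero.2 ht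
  have hx01 : 1 ≤ x0 := by
    have h1 : ((1 : ℕ) : ℕ∞) ≤ V (g 0) := le_emultiplicity_of_pow_dvd (by simpa using h0)
    rw [hx0] at h1
    exact_mod_cast h1
  have hα1 : 1 ≤ α := by
    by_contra hc
    have : α = 0 := by omega
    subst this
    have ht0 : t ≠ 0 := by rintro rfl; exact ht h0
    have h1 := (hm1 t htA 0 hVt).2 (by omega)
    rw [hs1] at hx0
    have : s1 = x0 := by exact_mod_cast hx0
    nlinarith
  refine ⟨α + β, by omega, s1 + s2, x0 + y0, ?_, ?_, by nlinarith⟩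
  · rw [hFs, ← Finset.add_sum_erase _ _ (show (α, β) ∈ Finset.range A ×ˢ Finset.range B by
      simp [hα, hβ])]
    rw [dvd_add_left]
    · have := E_add_pow hφ (α + β) 0 (g α * h β)
      rw [add_zero] at this
      simp only
      rw [this]
      exact not_dvd_mod hπ hφ hirr _ _ (hg α) (hh β) s1 s2 hs1 hs2
    · apply Finset.dvd_sum
      rintro ⟨i, j⟩ hij
      simp only [Finset.mem_erase, Finset.mem_product, Finset.mem_range, ne_eq, Prod.mk.injEq] at hij
      obtain ⟨hne, hi, hj⟩ := hij
      simp only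
      rcases lt_or_ge (α + β) (i + j) with hlt | hle
      · rw [E_lt_pow hφ _ _ hlt]; exact dvd_zero _
      · apply E_dvd hφ
        apply Dvd.dvd.mul_right
        by_cases hgi : g i = 0
        · simp [hgi]
        by_cases hhj : h j = 0
        · simp [hhj]
        obtain ⟨x, hx⟩ := hfin _ hgi
        obtain ⟨y, hy⟩ := hfin _ hhj
        have hxy : s1 + s2 + 1 ≤ x + y := by
          have a1 := hm1 i hi x hx
          have a2 := hm2 j hj y hy
          have : k * (s1 + s2) < k * (x + y) := by
            rw [mul_add, mul_add]
            by_cases c1 : α < i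
            · have := a1.2 c1; omega
            by_cases c2 : β < j
            · have := a2.2 c2; omega
            omega
          exact Nat.lt_of_mul_lt_mul_left this
        refine (pow_dvd_pow _ hxy).trans ?_
        rw [pow_add]
        exact mul_dvd_mul (pow_dvd_of_le_emultiplicity hx.ge) (pow_dvd_of_le_emultiplicity hy.ge)
  · rw [hF0']
    have := E_dvd hφ π 0 (g 0 * h 0) (x0 + y0) (by
      rw [pow_add]
      exact mul_dvd_mul (pow_dvd_of_le_emultiplicity hx0.ge) (pow_dvd_of_le_emultiplicity hy0.ge))
    simpa [E] using this

end Fil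

/-- Filaseta's lemma, extended, over a discrete valuation ring `R` with residue field `κ`:
let `0 ≤ ℓ < k ≤ n/2`, `φ ∈ R[x]` monic with irreducible image in `κ[x]`, `f ∈ R[x]` monic,
not divisible by `φ`, with `φ`-expansion `f = ∑_{i≤n} (fc i)·φ^i`, `fc n ≠ 0`. Assume
`v^x(fc i) > 0` for `i ≤ n-ℓ-1` and `k·(v^x(fc 0) - v^x(fc j)) < j` whenever `1 ≤ j ≤ n`
and `fc j ≠ 0`. If `deg (a i) < deg φ - deg (fc i)`, `v^x(a 0) = 0` (some coefficient of
`a 0` is outside the maximal ideal), and the leading coefficient of `a n` is a unit, then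
`∑_{i≤n} (a i)·(fc i)·φ^i` has no factor in `R[x]` of degree in
`[(ℓ+1)·deg φ, (k+1)·deg φ)`. -/
theorem filaseta_extension_dvr (R : Type*) [CommRing R] [IsDomain R]
    [IsDiscreteValuationRing R]
    (n k ℓ : ℕ) (hℓk : ℓ < k) (hk : 2 * k ≤ n)
    (φ : Polynomial R) (hφmonic : φ.Monic)
    (hφirr : Irreducible (φ.map (IsLocalRing.residue R)))
    (f : Polynomial R) (hfmonic : f.Monic) (hφf : ¬ φ ∣ f)
    (fc : ℕ → Polynomial R)
    (hexp : f = ∑ i ∈ Finset.range (n + 1), fc i * φ ^ i)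
    (hdegfc : ∀ i, (fc i).degree < φ.degree)
    (hfn : fc n ≠ 0)
    (h1 : ∀ i ≤ n - ℓ - 1, ∀ j, (fc i).coeff j ∈ IsLocalRing.maximalIdeal R)
    (hf0 : fc 0 ≠ 0)
    (h2 : ∀ j, 1 ≤ j → j ≤ n → fc j ≠ 0 → k * (vxDVR R (fc 0) - vxDVR R (fc j)) < j)
    (a : ℕ → Polynomial R)
    (hadeg : ∀ i ≤ n, (a i).degree + (fc i).degree < φ.degree)
    (ha0 : ∃ j, (a 0).coeff j ∉ IsLocalRing.maximalIdeal R)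
    (han : IsUnit (a n).leadingCoeff) :
    ∀ g : Polynomial R, g ∣ (∑ i ∈ Finset.range (n + 1), a i * fc i * φ ^ i) →
      ¬ ((ℓ + 1) * φ.natDegree ≤ g.natDegree ∧
         g.natDegree < (k + 1) * φ.natDegree) := by
  obtain ⟨π, hπ⟩ := IsDiscreteValuationRing.exists_irreducible R
  have hd : 0 < φ.natDegree := by
    have := hφirr.natDegree_pos
    rwa [hφmonic.natDegree_map] at this
  have hφ0 := hφmonic.ne_zero
  rintro g ⟨h, hF⟩ ⟨hg1, hg2⟩
  set F := ∑ i ∈ Finset.range (n + 1), a i * fc i * φ ^ i with hFdef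
  set ρ := IsLocalRing.residue R
  have hdeg : ∀ i < n + 1, (a i * fc i).degree < φ.degree := fun i hi => by
    rw [degree_mul]; exact hadeg i (by omega)
  have hE : ∀ m, Fil.E φ m F = if m < n + 1 then a m * fc m else 0 := fun m =>
    Fil.E_expansion hφmonic (n + 1) m (fun i => a i * fc i) hdeg
  -- degree bound for partial sums
  have hsum : ∀ (N : ℕ) (c : ℕ → R[X]), (∀ i < N, (c i).degree < φ.degree) →
      (∑ i ∈ Finset.range N, c i * φ ^ i).degree < ((N * φ.natDegree : ℕ) : WithBot ℕ) := by
    intro N c hc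
    refine (degree_sum_le _ _).trans_lt ((Finset.sup_lt_iff (WithBot.bot_lt_coe _)).2 ?_)
    intro i hi
    rw [Finset.mem_range] at hi
    by_cases h0 : c i = 0
    · simp only [h0, zero_mul, degree_zero]; exact WithBot.bot_lt_coe _
    have h1 := hc i hi
    rw [degree_eq_natDegree (mul_ne_zero h0 (pow_ne_zero _ hφ0)), natDegree_mul h0 (pow_ne_zero _ hφ0),
      natDegree_pow]
    rw [degree_eq_natDegree h0, degree_eq_natDegree hφ0] at h1
    have h2 : (c i).natDegree < φ.natDegree := by exact_mod_cast h1
    have h3 : (c i).natDegree + i * φ.natDegree < N * φ.natDegree := by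
      have : (i + 1) * φ.natDegree ≤ N * φ.natDegree := Nat.mul_le_mul_right _ hi
      rw [add_mul] at this
      omega
    exact_mod_cast h3
  -- fc n has leading coeff 1
  have hlc : (fc n).leadingCoeff = 1 := by
    have h1 : f.leadingCoeff = 1 := hfmonic
    rw [hexp, Finset.sum_range_succ, leadingCoeff_add_of_degree_lt] at h1
    · rwa [leadingCoeff_mul, leadingCoeff_pow, hφmonic.leadingCoeff, one_pow, mul_one] at h1
    · refine (hsum n fc fun i _ => hdegfc i).trans_le ?_
      rw [degree_eq_natDegree (mul_ne_zero hfn (pow_ne_zero _ hφ0)),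
        natDegree_mul hfn (pow_ne_zero _ hφ0), natDegree_pow]
      exact_mod_cast Nat.le_add_left _ _
  have hprime := Fil.primeC hπ
  have hunit : ∀ p : R[X], IsUnit p.leadingCoeff → ¬ C π ∣ p := by
    intro p hp hdv
    rw [C_dvd_iff_dvd_coeff] at hdv
    exact hπ.not_isUnit (isUnit_of_dvd_unit (hdv p.natDegree) hp)
  have hFπ : ¬ C π ∣ F := by
    intro hdv
    have := Fil.E_dvd hφmonic π n F 1 (by simpa using hdv)
    rw [hE, if_pos (by omega), pow_one] at this
    rcases hprime.dvd_or_dvd this with h | h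
    · exact hunit _ han h
    · exact hunit _ (by rw [hlc]; exact isUnit_one) h
  have hF0 : F ≠ 0 := by intro h; apply hFπ; rw [h]; exact dvd_zero _
  have hgne : g ≠ 0 := by rintro rfl; simp at hF; exact hF0 hF
  have hhne : h ≠ 0 := by rintro rfl; simp at hF; exact hF0 hF
  have hgπ : ¬ C π ∣ g := fun hc => hFπ (hF ▸ hc.mul_right _)
  have hhπ : ¬ C π ∣ h := fun hc => hFπ (hF ▸ hc.mul_left _)
  have hFdeg : g.natDegree + h.natDegree < (n + 1) * φ.natDegree := by
    have h1 := hsum (n + 1) (fun i => a i * fc i) hdeg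
    change F.degree < _ at h1
    rw [degree_eq_natDegree hF0, hF, natDegree_mul hgne hhne] at h1
    exact_mod_cast h1
  have hhdeg : h.natDegree < (n - ℓ) * φ.natDegree := by
    have : (n + 1) * φ.natDegree = (ℓ + 1) * φ.natDegree + (n - ℓ) * φ.natDegree := by
      rw [← add_mul]; congr 1; omega
    omega
  -- φ divides g mod π
  have hφg : φ.map ρ ∣ g.map ρ := by
    by_contra hc
    have h3 : (φ.map ρ) ^ (n - ℓ) ∣ g.map ρ * h.map ρ := by
      rw [← Polynomial.map_mul, ← hF, hFdef, Polynomial.map_sum]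
      apply Finset.dvd_sum
      intro i hi
      rw [Polynomial.map_mul, Polynomial.map_mul, Polynomial.map_pow]
      rcases lt_or_ge i (n - ℓ) with hlt | hge
      · have : (fc i).map ρ = 0 := by
          rw [← Fil.C_dvd_iff hπ, ← pow_one (C π), ← Fil.mem_pow_iff hπ]
          simpa using h1 i (by omega)
        simp [this]
      · exact (pow_dvd_pow _ hge).mul_left _
    have h4 := hφirr.prime.pow_dvd_of_dvd_mul_left _ hc h3
    have h5 : h.map ρ ≠ 0 := fun h0 => hhπ ((Fil.C_dvd_iff hπ h).2 h0)
    have h6 := natDegree_le_of_dvd h4 h5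
    rw [natDegree_pow, hφmonic.natDegree_map] at h6
    have h7 : (h.map ρ).natDegree ≤ h.natDegree := natDegree_map_le
    omega
  obtain ⟨gc, hgc, hgs⟩ := Fil.exists_expansion hφmonic (k + 1) g (Or.inr hg2)
  obtain ⟨hc, hhc, hhs⟩ := Fil.exists_expansion hφmonic (n + 1) h (Or.inr (by omega))
  have hg0 : C π ∣ gc 0 := by
    have h1 : gc 0 = g %ₘ φ := by
      have h2 := Fil.E_expansion hφmonic (k + 1) 0 gc fun i _ => hgc i
      rw [← hgs, if_pos (by omega)] at h2
      exact h2.symm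
    rw [Fil.C_dvd_iff hπ, h1, map_modByMonic _ hφmonic,
      modByMonic_eq_zero_iff_dvd (hφmonic.map _)]
    exact hφg
  have hgt : ∃ t < k + 1, ¬ C π ∣ gc t := by
    by_contra hcon
    push Not at hcon
    apply hgπ
    rw [hgs]
    exact Finset.dvd_sum fun i hi => (hcon i (Finset.mem_range.1 hi)).mul_right _
  obtain ⟨t, ht, htg⟩ := hgt
  have ha0' : ¬ C π ∣ a 0 := by
    intro hdv
    obtain ⟨j, hj⟩ := ha0
    rw [← pow_one (C π), ← Fil.mem_pow_iff hπ] at hdv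
    exact hj (by simpa using hdv j)
  have ha0ne : a 0 ≠ 0 := by intro h; apply ha0'; rw [h]; exact dvd_zero _
  obtain ⟨m, hm1, s, e, hs, he, hle⟩ := Fil.core hπ hφmonic hφirr k (by omega) (k + 1) (n + 1)
    gc hc hgc hhc (by omega) (by omega) F (by rw [hF, ← hgs, ← hhs])
    (by rw [hE, if_pos (by omega)]; exact mul_ne_zero ha0ne hf0) t ht (by omega) htg hg0
  rw [hE] at hs he
  rw [if_pos (by omega)] at he
  have hmn : m < n + 1 := by
    by_contra hcon
    rw [if_neg hcon] at hs
    exact hs (dvd_zero _)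
  rw [if_pos hmn] at hs
  have hfm : ¬ C π ^ (s + 1) ∣ fc m := fun hx => hs (hx.mul_left _)
  have hfm0 : fc m ≠ 0 := by intro h; apply hfm; rw [h]; exact dvd_zero _
  have hf0e : C π ^ e ∣ fc 0 := hprime.pow_dvd_of_dvd_mul_left _ ha0' he
  have b1 : e ≤ vxDVR R (fc 0) := by
    have := le_emultiplicity_of_pow_dvd hf0e
    rw [← Fil.vx_eq hπ hf0] at this
    exact_mod_cast this
  have b2 : vxDVR R (fc m) < s + 1 := by
    have := emultiplicity_lt_iff_not_dvd.2 hfm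
    rw [← Fil.vx_eq hπ hfm0] at this
    exact_mod_cast this
  have b3 := h2 m hm1 (by omega) hfm0
  have b4 : k * (e - s) ≤ k * (vxDVR R (fc 0) - vxDVR R (fc m)) :=
    Nat.mul_le_mul_left _ (by omega)
  rw [Nat.mul_sub] at b4
  omega
end

section
/- Let p be a prime, n ≥ 2 an integer, and let φ ∈ ℤ[x] be a monic polynomial whose reduction modulo p is irreducible in 𝔽_p[x]. Let M ∈ ℤ[x] have degree strictly less than n·deg φ and suppose the reduction of φ modulo p does not divide the reduction of M modulo p in 𝔽_p[x]. Let k be the largest integer not exceeding n/2. Then the polynomial f(x) = φ(x)^n + p·M(x) has no factor in ℤ[x] whose degree lies in the interval [deg φ, (k+1)·deg φ). -/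
open Polynomial

/-- A factor of `F ≡ φ^n` with unit leading coefficient and positive degree is divisible
by `φ` mod `p`. -/
theorem aux_factor (p : ℕ) [Fact p.Prime] (n : ℕ) (φ g : ℤ[X])
    (hφirr : Irreducible (φ.map (Int.castRingHom (ZMod p))))
    (hg : IsUnit g.leadingCoeff) (hd : 0 < g.natDegree)
    (h : g.map (Int.castRingHom (ZMod p)) ∣ (φ.map (Int.castRingHom (ZMod p))) ^ n) :
    ∃ a b : ℤ[X], g = φ * a + C (p : ℤ) * b := by
  have hdeg : (g.map (Int.castRingHom (ZMod p))).natDegree = g.natDegree := by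
    apply natDegree_map_of_leadingCoeff_ne_zero
    exact (hg.map (Int.castRingHom (ZMod p))).ne_zero
  have hdvd : φ.map (Int.castRingHom (ZMod p)) ∣ g.map (Int.castRingHom (ZMod p)) := by
    obtain ⟨i, hi, ha⟩ := (dvd_prime_pow hφirr.prime n).1 h
    rcases Nat.eq_zero_or_pos i with rfl | hi0
    · rw [pow_zero, associated_one_iff_isUnit] at ha
      have := natDegree_eq_zero_of_isUnit ha
      omega
    · exact (dvd_pow_self _ hi0.ne').trans ha.symm.dvd
  obtain ⟨q, hq⟩ := hdvd
  obtain ⟨a, rfl⟩ := map_surjective _ (ZMod.ringHom_surjective (Int.castRingHom (ZMod p))) q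
  have : C (p : ℤ) ∣ g - φ * a := by
    rw [C_dvd_iff_dvd_coeff]
    intro i
    rw [← ZMod.intCast_zmod_eq_zero_iff_dvd _ p]
    have := congrArg (fun r => coeff r i) hq
    rw [← Polynomial.map_mul] at this
    simp only [coeff_map, eq_intCast] at this
    simp [this]
  obtain ⟨b, hb⟩ := this
  exact ⟨a, b, by rw [← hb]; ring⟩

/-- Let `p` be a prime, `n ≥ 2`, and `φ ∈ ℤ[x]` monic and irreducible mod `p`. Let
`M ∈ ℤ[x]` have degree `< n·deg φ` with reduction mod `p` not divisible by that of `φ`.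
Then, with `k = ⌊n/2⌋`, the polynomial `φ^n + p·M` has no factor in `ℤ[x]` of degree
in the interval `[deg φ, (k+1)·deg φ)`. -/
theorem schonemann_no_factor (p : ℕ) (hp : p.Prime) (n : ℕ) (hn : 2 ≤ n)
    (φ M : ℤ[X]) (hφmonic : φ.Monic)
    (hφirr : Irreducible (φ.map (Int.castRingHom (ZMod p))))
    (hM : M.degree < ((n * φ.natDegree : ℕ) : WithBot ℕ))
    (hnotdvd : ¬ (φ.map (Int.castRingHom (ZMod p))) ∣ (M.map (Int.castRingHom (ZMod p)))) :
    ∀ g : ℤ[X], g ∣ (φ ^ n + C (p : ℤ) * M) →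
      ¬ (φ.natDegree ≤ g.natDegree ∧ g.natDegree < (n / 2 + 1) * φ.natDegree) := by
  intro g ⟨h, hgh⟩ ⟨h1, h2⟩
  have : Fact p.Prime := ⟨hp⟩
  set π := Int.castRingHom (ZMod p) with hπ
  have hd : 0 < φ.natDegree := by
    rw [← hφmonic.natDegree_map π]
    exact hφirr.natDegree_pos
  have hpow : (φ ^ n).Monic := hφmonic.pow n
  have hlt : (C (p : ℤ) * M).degree < (φ ^ n).degree := by
    rw [degree_eq_natDegree hpow.ne_zero, hφmonic.natDegree_pow,
      degree_C_mul (by exact_mod_cast hp.ne_zero)]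
    exact hM
  have hfm : (φ ^ n + C (p : ℤ) * M).Monic := hpow.add_of_left hlt
  have hfd : (φ ^ n + C (p : ℤ) * M).natDegree = n * φ.natDegree := by
    rw [natDegree_add_eq_left_of_degree_lt hlt, hφmonic.natDegree_pow]
  have hmap : g.map π * h.map π = φ.map π ^ n := by
    rw [← Polynomial.map_mul, ← hgh]
    simp [hπ]
  have hlc : g.leadingCoeff * h.leadingCoeff = 1 := by
    rw [← leadingCoeff_mul, ← hgh]; exact hfm
  have hg0 : g ≠ 0 := by rintro rfl; simp at hlc
  have hh0 : h ≠ 0 := by rintro rfl; simp at hlc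
  have hsum : n * φ.natDegree = g.natDegree + h.natDegree := by
    rw [← hfd, hgh, natDegree_mul hg0 hh0]
  have hle : (n / 2 + 1) * φ.natDegree ≤ n * φ.natDegree :=
    Nat.mul_le_mul_right _ (by omega)
  obtain ⟨a, b, hab⟩ := aux_factor p n φ g hφirr (IsUnit.of_mul_eq_one _ hlc) (by omega)
    (Dvd.intro _ hmap)
  obtain ⟨c, e, hce⟩ := aux_factor p n φ h hφirr
    (IsUnit.of_mul_eq_one g.leadingCoeff (by rw [mul_comm]; exact hlc)) (by omega)
    (Dvd.intro_left _ hmap)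
  obtain ⟨m, rfl⟩ : ∃ m, n = m + 2 := ⟨n - 2, by omega⟩
  have key : φ ^ 2 * (a * c - φ ^ m)
      = C (p : ℤ) * (M - φ * (a * e + b * c) - C (p : ℤ) * (b * e)) := by
    rw [hab, hce] at hgh
    linear_combination -hgh
  have hpp : Prime (C (p : ℤ)) := prime_C_iff.2 (Nat.prime_iff_prime_int.1 hp)
  have hCp : (C (p : ℤ)).map π = 0 := by simp [hπ]
  have hnd : ¬ C (p : ℤ) ∣ φ := by
    rintro ⟨r, hr⟩
    apply hφirr.ne_zero
    rw [hr, Polynomial.map_mul, hCp, zero_mul]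
  obtain ⟨x, hx⟩ : C (p : ℤ) ∣ a * c - φ ^ m :=
    (hpp.dvd_or_dvd (Dvd.intro _ key.symm)).resolve_left
      (fun h => hnd (hpp.dvd_of_dvd_pow h))
  have key2 : M = φ * (φ * x + (a * e + b * c)) + C (p : ℤ) * (b * e) := by
    apply mul_left_cancel₀ hpp.ne_zero
    rw [hx] at key
    linear_combination -key
  apply hnotdvd
  rw [key2, Polynomial.map_add, Polynomial.map_mul, Polynomial.map_mul, hCp, zero_mul,
    add_zero]
  exact dvd_mul_right _ _
end

section
/- Let n ≥ 2 be an integer, p a prime dividing n, and let m ≥ 1 be the exact power of p dividing n (i.e., p^m divides n and p^{m+1} does not). Let φ ∈ ℤ[x] be a monic polynomial whose reduction modulo p is irreducible in 𝔽_p[x]. Let a_0(x), a_1(x), …, a_{n−1}(x) ∈ ℤ[x] be polynomials each of degree strictly less than deg φ whose contents are all coprime to p. Then every irreducible factor of the polynomial F(x) = Σ_{i=0}^{n−1} (n!/i!)·a_i(x)·φ(x)^i + φ(x)^n over the field ℚ_p of p-adic numbers has degree divisible by p^m·deg φ. -/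
open Polynomial

def dsum (p k : ℕ) : ℕ := (Nat.digits p k).sum

theorem dsum_val (p : ℕ) [hp : Fact p.Prime] (k : ℕ) :
    ((p:ℤ) - 1) * (padicValNat p k.factorial : ℤ) = k - dsum p k := by
  have h := sub_one_mul_padicValNat_factorial (p := p) k
  have h2 := Nat.digit_sum_le p k
  have h3 := hp.out.one_le
  unfold dsum
  have h4 := congrArg (Nat.cast : ℕ → ℤ) h
  rw [Nat.cast_mul, Nat.cast_sub h3, Nat.cast_sub h2, Nat.cast_one] at h4
  exact h4

theorem dsum_succ_le (p : ℕ) [hp : Fact p.Prime] (k : ℕ) : dsum p (k+1) ≤ dsum p k + 1 := by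
  have h1 := dsum_val p k
  have h2 := dsum_val p (k+1)
  have h3 : padicValNat p k.factorial ≤ padicValNat p (k+1).factorial := by
    rw [Nat.factorial_succ, padicValNat.mul (by positivity) (by positivity)]; omega
  have h4 : (1:ℤ) ≤ p := by exact_mod_cast hp.out.one_le
  have h5 : ((p:ℤ) - 1) * (padicValNat p k.factorial : ℤ) ≤ ((p:ℤ) - 1) * (padicValNat p (k+1).factorial : ℤ) := by
    apply mul_le_mul_of_nonneg_left <;> [exact_mod_cast h3; linarith]
  push_cast at *
  omega

theorem dsum_rec (p : ℕ) [hp : Fact p.Prime] (c k : ℕ) (hc : c < p) :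
    dsum p (c + p * k) = c + dsum p k := by
  unfold dsum
  by_cases h : c = 0 ∧ k = 0
  · simp [h.1, h.2]
  · rw [Nat.digits_add p hp.out.one_lt c k hc (by tauto)]; simp

theorem dsum_split (p : ℕ) [hp : Fact p.Prime] (k : ℕ) : ∀ q r : ℕ, r < p ^ k →
    dsum p (q * p ^ k + r) = dsum p q + dsum p r := by
  induction k with
  | zero => intro q r h; simp at h; simp [h, dsum]
  | succ k ih =>
    intro q r h
    have h1 : q * p ^ (k+1) + r = r % p + p * (q * p ^ k + r / p) := by
      conv_lhs => rw [← Nat.mod_add_div r p]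
      ring
    have hlt := Nat.mod_lt r hp.out.pos
    have h2 : r / p < p ^ k := by
      rw [Nat.div_lt_iff_lt_mul hp.out.pos, ← pow_succ]; exact h
    rw [h1, dsum_rec p _ _ hlt, ih _ _ h2]
    conv_rhs => rw [← Nat.mod_add_div r p, dsum_rec p _ _ hlt]
    ring

theorem le_dsum (p : ℕ) [hp : Fact p.Prime] (k : ℕ) : ∀ r : ℕ, r < p ^ (k+1) →
    r ≤ p ^ k * dsum p r := by
  induction k with
  | zero =>
    intro r h
    have := dsum_rec p r 0 (by simpa using h)
    simp at this
    simp [this]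
  | succ k ih =>
    intro r h
    have hlt := Nat.mod_lt r hp.out.pos
    have h2 : r / p < p ^ (k+1) := by
      rw [Nat.div_lt_iff_lt_mul hp.out.pos, ← pow_succ]; exact h
    have h3 := ih _ h2
    have h4 := dsum_rec p _ (r/p) hlt
    rw [Nat.mod_add_div] at h4
    rw [h4]
    have h5 : 1 ≤ p ^ (k+1) := Nat.one_le_pow _ _ hp.out.pos
    calc r = r % p + p * (r / p) := (Nat.mod_add_div r p).symm
      _ ≤ p ^ (k+1) * (r % p) + p * (p ^ k * dsum p (r/p)) := by
        gcongr; exact Nat.le_mul_of_pos_left _ h5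
      _ = _ := by ring

theorem one_le_dsum (p : ℕ) [hp : Fact p.Prime] (r : ℕ) (h : 0 < r) : 1 ≤ dsum p r := by
  by_contra h0
  have h1 : dsum p r = 0 := by omega
  obtain ⟨k, hk⟩ := pow_unbounded_of_one_lt r hp.out.one_lt
  have := le_dsum p k r (hk.trans_le (Nat.pow_le_pow_right hp.out.pos (by omega)))
  rw [h1] at this; omega

theorem comb (p : ℕ) [hp : Fact p.Prime] (n m e s : ℕ) (he : 0 < e)
    (hpm : p ^ m ∣ n) (i j : ℕ) (hij : i < j) (hj : j ≤ n)
    (hmin : ∀ k ≤ n, (i * s : ℤ) - e * padicValNat p i.factorial ≤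
      k * s - e * padicValNat p k.factorial)
    (heq : (i * s : ℤ) - e * padicValNat p i.factorial = j * s - e * padicValNat p j.factorial) :
    p ^ m ∣ e := by
  have hp1 : (0:ℤ) < p - 1 := by have := hp.out.one_lt; omega
  obtain ⟨t, ht⟩ : ∃ t : ℤ, t = e - (p-1) * s := ⟨_, rfl⟩
  have hH : ∀ k : ℕ, ((p:ℤ)-1) * (k * s - e * padicValNat p k.factorial) = e * dsum p k - t * k := by
    intro k
    have := dsum_val p k
    rw [ht]; linear_combination (-(e:ℤ)) * this
  have hmin' : ∀ x k : ℕ, x = i ∨ x = j → k ≤ n →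
      (e * dsum p x - t * x : ℤ) ≤ e * dsum p k - t * k := by
    intro x k hx hk
    rw [← hH, ← hH]
    apply mul_le_mul_of_nonneg_left _ hp1.le
    rcases hx with rfl | rfl
    · exact hmin k hk
    · rw [← heq]; exact hmin k hk
  clear heq hmin hH
  have he' : (0:ℤ) < e := by exact_mod_cast he
  have htpos : 0 < t := by
    by_contra h
    have h1 := hmin' j 0 (Or.inr rfl) (Nat.zero_le _)
    have h2 : (1:ℤ) ≤ dsum p j := by exact_mod_cast one_le_dsum p j (by omega)
    have h0 : dsum p 0 = 0 := by simp [dsum]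
    rw [h0] at h1
    have : (0:ℤ) ≤ j := by positivity
    push_cast at h1
    nlinarith
  have hex : ∃ k : ℕ, (e:ℤ) < t * p ^ k := by
    obtain ⟨k, hk⟩ := pow_unbounded_of_one_lt e hp.out.one_lt
    refine ⟨k, ?_⟩
    have : (e:ℤ) < p ^ k := by exact_mod_cast hk
    nlinarith
  classical
  let k := Nat.find hex
  have hk : (e:ℤ) < t * p ^ k := Nat.find_spec hex
  have hkmin : ∀ l < k, t * p ^ l ≤ (e:ℤ) := fun l hl => not_lt.mp (Nat.find_min hex hl)
  clear_value k
  have hpk : 0 < p ^ k := Nat.pow_pos hp.out.pos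
  have hq : ∀ x : ℕ, x = i ∨ x = j → x / p ^ k = n / p ^ k := by
    intro x hx
    have hxn : x ≤ n := by omega
    apply le_antisymm (Nat.div_le_div_right hxn)
    by_contra hlt
    push Not at hlt
    set q := x / p ^ k with hqd
    set r := x % p ^ k with hrd
    have hxe : x = q * p ^ k + r := by rw [hqd, hrd, mul_comm]; exact (Nat.div_add_mod x _).symm
    have hr : r < p ^ k := Nat.mod_lt _ hpk
    have hle : (q+1) * p ^ k ≤ n := le_trans (Nat.mul_le_mul_right _ hlt) (Nat.div_mul_le_self n _)
    have h1 := hmin' x _ hx hle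
    have h2 := dsum_split p k (q+1) 0 hpk
    have h3 := dsum_split p k q r hr
    rw [← hxe] at h3
    have h0 : dsum p 0 = 0 := by simp [dsum]
    rw [h0, add_zero, add_zero] at h2
    rw [h2, h3] at h1
    have h4 : (dsum p (q+1) : ℤ) ≤ dsum p q + 1 := by exact_mod_cast dsum_succ_le p q
    have h4' := mul_le_mul_of_nonneg_left h4 he'.le
    have hxe' : (x:ℤ) = q * p ^ k + r := by exact_mod_cast hxe
    rw [hxe'] at h1
    push_cast at h1
    rcases Nat.eq_zero_or_pos r with h5 | h5
    · rw [h5, h0] at h1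
      push_cast at h1
      nlinarith
    · have h6 : (1:ℤ) ≤ dsum p r := by exact_mod_cast one_le_dsum p r h5
      have h6' := mul_le_mul_of_nonneg_left h6 he'.le
      have hr' : (r:ℤ) < p ^ k := by exact_mod_cast hr
      have := mul_lt_mul_of_pos_left hr' htpos
      nlinarith
  have hmk : m < k := by
    by_contra h
    have h1 : p ^ k ∣ n := (pow_dvd_pow p (by omega)).trans hpm
    have h2 := hq i (Or.inl rfl)
    have h3 : n / p ^ k * p ^ k = n := Nat.div_mul_cancel h1
    have h4 := Nat.div_mul_le_self i (p ^ k)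
    rw [h2, h3] at h4
    omega
  obtain ⟨l, rfl⟩ : ∃ l, k = l + 1 := ⟨k-1, by omega⟩
  have hl := hkmin l (by omega)
  rcases hl.eq_or_lt with h | h
  · have : ((p ^ m : ℕ) : ℤ) ∣ e := by
      rw [← h]; push_cast
      exact Dvd.dvd.mul_left (pow_dvd_pow _ (by omega)) _
    exact_mod_cast this
  · exfalso
    have hz : ∀ x : ℕ, x = i ∨ x = j → x % p ^ (l+1) = 0 := by
      intro x hx
      have hxn : x ≤ n := by omega
      by_contra hr0
      set q := x / p ^ (l+1) with hqd
      set r := x % p ^ (l+1) with hrd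
      have hxe : x = q * p ^ (l+1) + r := by rw [hqd, hrd, mul_comm]; exact (Nat.div_add_mod x _).symm
      have hr : r < p ^ (l+1) := Nat.mod_lt _ hpk
      have h1 := hmin' x (q * p ^ (l+1)) hx (by rw [hxe] at hxn; exact (Nat.le_add_right _ _).trans hxn)
      have h0 : dsum p 0 = 0 := by simp [dsum]
      have h2 := dsum_split p (l+1) q 0 hpk
      have h3 := dsum_split p (l+1) q r hr
      rw [← hxe] at h3
      rw [h0, add_zero, add_zero] at h2
      rw [h2, h3] at h1
      have hxe' : (x:ℤ) = q * p ^ (l+1) + r := by exact_mod_cast hxe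
      rw [hxe'] at h1
      push_cast at h1
      have h5 : (r:ℤ) ≤ p ^ l * dsum p r := by exact_mod_cast le_dsum p l r hr
      have h6 : (1:ℤ) ≤ dsum p r := by exact_mod_cast one_le_dsum p r (Nat.pos_of_ne_zero hr0)
      have h7 := mul_le_mul_of_nonneg_left h5 htpos.le
      have h8 : t * p ^ l * dsum p r < e * dsum p r := mul_lt_mul_of_pos_right h (by linarith)
      nlinarith
    have h1 := Nat.div_add_mod i (p ^ (l+1))
    have h2 := Nat.div_add_mod j (p ^ (l+1))
    rw [hz _ (Or.inl rfl), hq _ (Or.inl rfl)] at h1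
    rw [hz _ (Or.inr rfl), hq _ (Or.inr rfl)] at h2
    omega

theorem val_twice {O Γ : Type*} [CommRing O] [LinearOrderedCommGroupWithZero Γ] (v : Valuation O Γ)
    (n : ℕ) (f : ℕ → O) (hf : ∀ i ≤ n, v (f i) ≠ 0) (h0 : ∑ i ∈ Finset.range (n+1), f i = 0) :
    ∃ i j, i < j ∧ j ≤ n ∧ v (f i) = v (f j) ∧ ∀ k ≤ n, v (f k) ≤ v (f i) := by
  obtain ⟨i, hi, hmax⟩ := Finset.exists_max_image (Finset.range (n+1)) (fun k => v (f k)) ⟨0, by simp⟩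
  have hi' : i ≤ n := by simpa [Nat.lt_succ_iff] using hi
  have hmax' : ∀ k ≤ n, v (f k) ≤ v (f i) := fun k hk => hmax k (by simpa [Nat.lt_succ_iff] using hk)
  by_contra hcon
  push Not at hcon
  have key : v (∑ k ∈ Finset.range (n+1), f k) = v (f i) := by
    apply Valuation.map_sum_eq_of_lt v hi
    intro k hk
    simp at hk
    refine lt_of_le_of_ne (hmax' k hk.1) fun heq => ?_
    rcases lt_or_gt_of_ne hk.2 with h | h
    · obtain ⟨l, hl, hl'⟩ := hcon k i h hi' heq
      exact absurd (hmax' l hl) (by rw [← heq]; exact not_le.mpr hl')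
    · obtain ⟨l, hl, hl'⟩ := hcon i k h hk.1 heq.symm
      exact absurd (hmax' l hl) (not_le.mpr hl')
  rw [h0, map_zero] at key
  exact hf i hi' key.symm

theorem val_nat {O : Type*} [CommRing O] [IsDedekindDomain O] (P : IsDedekindDomain.HeightOneSpectrum O)
    (p : ℕ) [hp : Fact p.Prime] (hpP : (p : O) ∈ P.asIdeal) (N : ℕ) (hN : N ≠ 0) :
    P.intValuation (N : O) = P.intValuation (p : O) ^ padicValNat p N := by
  have h1 := Nat.ordProj_mul_ordCompl_eq_self N p
  have h2 := Nat.not_dvd_ordCompl hp.out hN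
  rw [Nat.factorization_def N hp.out] at h1 h2
  set u := N / p ^ padicValNat p N
  have h3 : P.intValuation (u : O) = 1 := by
    rw [P.intValuation_eq_one_iff]
    intro hu
    have hc : IsCoprime (p : ℤ) (u : ℤ) := by
      rw [Nat.isCoprime_iff_coprime]; exact (Nat.Prime.coprime_iff_not_dvd hp.out).mpr h2
    obtain ⟨x, y, hxy⟩ := hc
    apply P.isPrime.ne_top
    rw [Ideal.eq_top_iff_one]
    have := congrArg (Int.cast : ℤ → O) hxy
    push_cast at this
    rw [← this]
    exact Ideal.add_mem _ (Ideal.mul_mem_left _ _ hpP) (Ideal.mul_mem_left _ _ hu)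
  conv_lhs => rw [← h1]
  push_cast
  rw [map_mul, map_pow, h3, mul_one]

theorem unit_part (p : ℕ) [hp : Fact p.Prime] (φ : ℤ[X]) (hφmonic : φ.Monic)
    (hφirr : Irreducible (φ.map (Int.castRingHom (ZMod p)))) (a : ℤ[X])
    (hdeg : a.degree < φ.degree) (hcont : IsCoprime a.content (p : ℤ))
    {O : Type*} [CommRing O] (P : Ideal O) [hP : P.IsPrime] (hpP : (p : O) ∈ P) (θ : O)
    (h : aeval θ φ ∈ P) : aeval θ a ∉ P := by
  intro ha
  have h0 : (p : O ⧸ P) = 0 := by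
    rw [← map_natCast (Ideal.Quotient.mk P), Ideal.Quotient.eq_zero_iff_mem]; exact hpP
  have : CharP (O ⧸ P) p := by
    have := CharP.ringChar_of_prime_eq_zero hp.out h0
    exact ringChar.of_eq this
  let ψ : ZMod p →+* O ⧸ P := ZMod.castHom (dvd_refl p) _
  have hev : ∀ b : ℤ[X], (b.map (Int.castRingHom (ZMod p))).eval₂ ψ (Ideal.Quotient.mk P θ)
      = Ideal.Quotient.mk P (aeval θ b) := by
    intro b
    rw [eval₂_map, aeval_def, hom_eval₂]
    congr 1
    exact RingHom.ext_int _ _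
  have hane : a.map (Int.castRingHom (ZMod p)) ≠ 0 := by
    intro hz
    have h1 : C (p:ℤ) ∣ a := by
      rw [C_dvd_iff_dvd_coeff]
      intro i
      have := congrArg (fun q => coeff q i) hz
      simpa [ZMod.intCast_zmod_eq_zero_iff_dvd] using this
    have h2 : (p:ℤ) ∣ a.content := dvd_content_iff_C_dvd.mpr h1
    have h3 : IsUnit (p:ℤ) := hcont.isUnit_of_dvd' h2 dvd_rfl
    exact (Nat.prime_iff_prime_int.mp hp.out).not_isUnit h3
  have hnd : ¬ φ.map (Int.castRingHom (ZMod p)) ∣ a.map (Int.castRingHom (ZMod p)) := by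
    intro hd
    have h1 := degree_le_of_dvd hd hane
    rw [hφmonic.degree_map] at h1
    exact absurd (h1.trans degree_map_le) (not_le.mpr hdeg)
  obtain ⟨x, y, hxy⟩ := (hφirr.coprime_iff_not_dvd).mpr hnd
  have := congrArg (fun q => q.eval₂ ψ (Ideal.Quotient.mk P θ)) hxy
  simp only [eval₂_add, eval₂_mul, hev, Ideal.Quotient.eq_zero_iff_mem.mpr h,
    Ideal.Quotient.eq_zero_iff_mem.mpr ha, eval₂_one, mul_zero, add_zero] at this
  exact zero_ne_one this

theorem local_part (p : ℕ) [hp : Fact p.Prime] (n : ℕ) 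
    (hpn : p ∣ n) (m : ℕ) (hpm : p ^ m ∣ n) 
    (φ : ℤ[X]) (hφmonic : φ.Monic)
    (hφirr : Irreducible (φ.map (Int.castRingHom (ZMod p))))
    (a : ℕ → ℤ[X])
    (hdeg : ∀ i < n, (a i).degree < φ.degree)
    (hcont : ∀ i < n, IsCoprime ((a i).content) (p : ℤ)) (hn : 0 < n)
    {O : Type*} [CommRing O] [IsDedekindDomain O] [CharZero O]
    (P : IsDedekindDomain.HeightOneSpectrum O)
    (hpP : (p : O) ∈ P.asIdeal) (θ : O)
    (hθ : aeval θ (∑ i ∈ Finset.range n,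
            C ((n.factorial / i.factorial : ℕ) : ℤ) * a i * φ ^ i + φ ^ n) = 0) :
    aeval θ φ ∈ P.asIdeal ∧ ∀ e : ℕ, P.intValuation (p : O) = WithZero.exp (-(e:ℤ)) → p ^ m ∣ e := by
  have hPp := P.isPrime
  have hF : ∑ i ∈ Finset.range n, ((n.factorial / i.factorial : ℕ) : O) * aeval θ (a i) *
      (aeval θ φ) ^ i + (aeval θ φ) ^ n = 0 := by
    simp only [map_add, map_sum, map_mul, map_pow, eq_intCast, Int.cast_natCast,
      map_natCast] at hθ
    exact hθ
  have hmem : aeval θ φ ∈ P.asIdeal := by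
    apply hPp.mem_of_pow_mem n
    rw [← add_eq_zero_iff_neg_eq.mp hF]
    apply neg_mem
    apply sum_mem
    intro i hi
    rw [mul_assoc]
    apply Ideal.mul_mem_right
    have hd : p ∣ n.factorial / i.factorial := by
      obtain ⟨k, rfl⟩ : ∃ k, n = k + 1 := ⟨n-1, by omega⟩
      have : i ≤ k := by simpa [Nat.lt_succ_iff] using hi
      rw [Nat.factorial_succ, Nat.mul_div_assoc _ (Nat.factorial_dvd_factorial this)]
      exact Dvd.dvd.mul_right hpn _
    obtain ⟨c, hc⟩ := hd
    rw [hc]; push_cast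
    exact Ideal.mul_mem_right _ _ hpP
  refine ⟨hmem, fun e he => ?_⟩
  have hunit : ∀ i < n, P.intValuation (aeval θ (a i)) = 1 := by
    intro i hi
    rw [P.intValuation_eq_one_iff]
    exact unit_part p φ hφmonic hφirr (a i) (hdeg i hi) (hcont i hi) P.asIdeal hpP θ hmem
  have hx0 : aeval θ φ ≠ 0 := by
    intro h0
    rw [h0, zero_pow hn.ne', add_zero, Finset.sum_eq_single 0] at hF
    · have h1 := hunit 0 hn
      have h2 : ((n.factorial / Nat.factorial 0 : ℕ) : O) ≠ 0 := by
        simp [Nat.factorial_ne_zero]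
      simp [Nat.factorial_ne_zero] at hF
      rw [hF] at h1
      simp at h1
    · intro b _ hb
      simp [hb]
    · intro h; simp at h; omega
  obtain ⟨s, hs⟩ : ∃ s : ℕ, P.intValuation (aeval θ φ) = WithZero.exp (-(s:ℤ)) :=
    ⟨_, P.intValuation_eq_exp_neg_multiplicity hx0⟩
  let b : ℕ → O := fun i => if i < n then aeval θ (a i) else 1
  have hb : ∀ i, P.intValuation (b i) = 1 := by
    intro i
    by_cases h : i < n
    · simp only [b, if_pos h]; exact hunit i h
    · simp [b, h]
  let f : ℕ → O := fun i => ((n.factorial / i.factorial : ℕ) : O) * b i * (aeval θ φ) ^ i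
  have hsum : ∑ i ∈ Finset.range (n+1), f i = 0 := by
    rw [Finset.sum_range_succ, ← hF]
    congr 1
    · apply Finset.sum_congr rfl
      intro i hi
      simp at hi
      simp [f, b, hi]
    · simp [f, b, Nat.div_self (Nat.factorial_pos n)]
  have hval : ∀ i ≤ n, P.intValuation (f i) = WithZero.exp
      (-(e * (padicValNat p n.factorial - padicValNat p i.factorial : ℤ) + i * s)) := by
    intro i hi
    have hd := Nat.factorial_dvd_factorial hi
    have hN : n.factorial / i.factorial ≠ 0 := 
      (Nat.div_pos (Nat.le_of_dvd (Nat.factorial_pos _) hd) (Nat.factorial_pos _)).ne'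
    have hV : padicValNat p (n.factorial / i.factorial) + padicValNat p i.factorial =
        padicValNat p n.factorial := by
      rw [← padicValNat.mul hN (Nat.factorial_ne_zero _), Nat.div_mul_cancel hd]
    have hV' : (padicValNat p n.factorial : ℤ) =
      (padicValNat p (n.factorial / i.factorial) : ℕ) + (padicValNat p i.factorial : ℕ) := by
      rw [← hV, Nat.cast_add]
    simp only [f, map_mul, map_pow, hb, mul_one, hs]
    rw [val_nat P p hpP _ hN, he, hV', ← WithZero.exp_nsmul, ← WithZero.exp_nsmul, ← WithZero.exp_add]
    congr 1
    simp only [nsmul_eq_mul]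
    ring
  obtain ⟨i, j, hij, hj, heq, hmax⟩ := val_twice P.intValuation n f
    (fun i hi => by rw [hval i hi]; exact WithZero.exp_ne_zero) hsum
  have hepos : 0 < e := by
    rcases Nat.eq_zero_or_pos e with h | h
    · have := (P.intValuation_lt_one_iff_mem (p:O)).mpr hpP
      rw [he, h] at this
      simp at this
    · exact h
  apply comb p n m e s hepos hpm i j hij hj
  · intro k hk
    have := hmax k hk
    rw [hval k hk, hval i (by omega), WithZero.exp_le_exp] at this
    nlinarith
  · rw [hval i (by omega), hval j hj, WithZero.exp_inj] at heq
    linarith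

theorem resid_irr (p : ℕ) [hp : Fact p.Prime] (φ : ℤ[X])
    (hφirr : Irreducible (φ.map (Int.castRingHom (ZMod p)))) :
    Irreducible (φ.map (Int.castRingHom (ℤ_[p] ⧸ IsLocalRing.maximalIdeal ℤ_[p]))) := by
  let E : (ℤ_[p] ⧸ IsLocalRing.maximalIdeal ℤ_[p]) ≃+* ZMod p := PadicInt.residueField
  have h := (MulEquiv.irreducible_iff (Polynomial.mapEquiv E.symm).toMulEquiv).mpr hφirr
  convert h using 1
  change _ = Polynomial.map E.symm.toRingHom _
  rw [Polynomial.map_map]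
  congr 1
  exact RingHom.ext_int _ _

theorem deg_dvd_inertia (p : ℕ) [hp : Fact p.Prime] (φ : ℤ[X]) (hφmonic : φ.Monic)
    (hφirr : Irreducible (φ.map (Int.castRingHom (ZMod p))))
    {O : Type*} [CommRing O] [Algebra ℤ_[p] O] [Module.Finite ℤ_[p] O]
    (P : Ideal O) [hP : P.IsMaximal] [P.LiesOver (IsLocalRing.maximalIdeal ℤ_[p])] (θ : O)
    (h : aeval θ φ ∈ P) :
    φ.natDegree ∣ Ideal.inertiaDeg' (IsLocalRing.maximalIdeal ℤ_[p]) P := by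
  rw [Ideal.inertiaDeg'_algebraMap]
  let k := ℤ_[p] ⧸ IsLocalRing.maximalIdeal ℤ_[p]
  let : Field k := Ideal.Quotient.field _
  let : Field (O ⧸ P) := Ideal.Quotient.field _
  have hirr := resid_irr p φ hφirr
  have hmon := hφmonic.map (Int.castRingHom k)
  have hroot : aeval (Ideal.Quotient.mk P θ) (φ.map (Int.castRingHom k)) = 0 := by
    rw [aeval_def, eval₂_map, ← Ideal.Quotient.eq_zero_iff_mem.mpr h, aeval_def, hom_eval₂]
    congr 1
    exact RingHom.ext_int _ _
  have hmin := minpoly.eq_of_irreducible_of_monic hirr hroot hmon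
  have hint : IsIntegral k (Ideal.Quotient.mk P θ) := ⟨_, hmon, by rwa [← aeval_def]⟩
  have := minpoly.degree_dvd hint
  rw [← hmin, hφmonic.natDegree_map] at this
  exact this

set_option linter.deprecated false in
theorem padic_factor_degree (p : ℕ) [hp : Fact p.Prime] (n : ℕ) (hn : 2 ≤ n)
    (hpn : p ∣ n) (m : ℕ) (hm : 1 ≤ m) (hpm : p ^ m ∣ n) (hpm' : ¬ p ^ (m + 1) ∣ n)
    (φ : ℤ[X]) (hφmonic : φ.Monic)
    (hφirr : Irreducible (φ.map (Int.castRingHom (ZMod p))))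
    (a : ℕ → ℤ[X])
    (hdeg : ∀ i < n, (a i).degree < φ.degree)
    (hcont : ∀ i < n, IsCoprime ((a i).content) (p : ℤ)) :
    ∀ g : Polynomial ℚ_[p], Irreducible g →
      g ∣ ((∑ i ∈ Finset.range n,
            C ((n.factorial / i.factorial : ℕ) : ℤ) * a i * φ ^ i
          + φ ^ n).map (Int.castRingHom ℚ_[p])) →
      (p ^ m * φ.natDegree) ∣ g.natDegree := by
  intro g hg hgF
  have hFmonic : (∑ i ∈ Finset.range n,
            C ((n.factorial / i.factorial : ℕ) : ℤ) * a i * φ ^ i + φ ^ n).Monic := by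
    rw [add_comm]
    apply (hφmonic.pow n).add_of_left
    apply lt_of_le_of_lt (degree_sum_le _ _)
    have hφ0 : φ ≠ 0 := hφmonic.ne_zero
    rw [Finset.sup_lt_iff (by rw [bot_lt_iff_ne_bot, Ne, degree_eq_bot]; exact pow_ne_zero _ hφ0)]
    intro i hi
    simp at hi
    calc _ = (C ((n.factorial / i.factorial : ℕ) : ℤ) * (a i * φ ^ i)).degree := by rw [mul_assoc]
      _ ≤ (a i * φ ^ i).degree := by
        rw [← smul_eq_C_mul]; exact degree_smul_le _ _
      _ = (a i).degree + (φ ^ i).degree := degree_mul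
      _ < φ.degree + (φ ^ i).degree := by
        apply WithBot.add_lt_add_right _ (hdeg i hi)
        rw [Ne, degree_eq_bot]; exact pow_ne_zero _ hφ0
      _ = (φ ^ (i+1)).degree := by rw [← degree_mul, pow_succ, mul_comm]
      _ ≤ (φ ^ n).degree := by
        apply degree_le_of_dvd (pow_dvd_pow _ hi) (pow_ne_zero _ hφ0)
  generalize hFdef : (∑ i ∈ Finset.range n,
            C ((n.factorial / i.factorial : ℕ) : ℤ) * a i * φ ^ i + φ ^ n) = F at *
  have : Fact (Irreducible g) := ⟨hg⟩
  let K := AdjoinRoot g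
  have : Module.Finite ℚ_[p] K := (AdjoinRoot.powerBasis hg.ne_zero).finite
  have hfin : Module.finrank ℚ_[p] K = g.natDegree := by
    rw [(AdjoinRoot.powerBasis hg.ne_zero).finrank]; rfl
  have hcz : CharZero K := charZero_of_injective_algebraMap (algebraMap ℚ_[p] K).injective
  let R := ℤ_[p]
  let O := integralClosure R K
  have : IsScalarTower R ℚ_[p] K := inferInstance
  have : Module.Finite R O := IsIntegralClosure.finite R ℚ_[p] K O
  have : IsDedekindDomain O := integralClosure.isDedekindDomain R ℚ_[p] K
  have : IsFractionRing O K := integralClosure.isFractionRing_of_finite_extension ℚ_[p] K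
  have : CharZero O := inferInstance
  have hinj : Function.Injective (algebraMap R O) := by
    have h1 : Function.Injective (algebraMap R K) := by
      rw [IsScalarTower.algebraMap_eq R ℚ_[p] K]
      exact (algebraMap ℚ_[p] K).injective.comp (IsFractionRing.injective R ℚ_[p])
    intro x y hxy
    apply h1
    rw [IsScalarTower.algebraMap_apply R O K, hxy, ← IsScalarTower.algebraMap_apply R O K]
  have hfs : FaithfulSMul R O := (faithfulSMul_iff_algebraMap_injective R O).mpr hinj
  have htf : Module.IsTorsionFree R O := inferInstance
  have hx : aeval (AdjoinRoot.root g) F = 0 := by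
    obtain ⟨c, hc⟩ := hgF
    have : aeval (AdjoinRoot.root g) (F.map (Int.castRingHom ℚ_[p])) = 0 := by
      rw [hc, map_mul, AdjoinRoot.aeval_eq, AdjoinRoot.mk_self, zero_mul]
    rwa [← algebraMap_int_eq, aeval_map_algebraMap] at this
  have hxi : IsIntegral R (AdjoinRoot.root g) := by
    have : IsIntegral ℤ (AdjoinRoot.root g) := ⟨F, hFmonic, by rwa [← aeval_def]⟩
    exact this.tower_top
  let θ : O := ⟨AdjoinRoot.root g, hxi⟩
  have hθ : aeval θ F = 0 := by
    apply Subtype.ext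
    have : ((aeval θ F : O) : K) = aeval (AdjoinRoot.root g) F := by
      change algebraMap O K _ = _
      rw [← aeval_algebraMap_apply]; rfl
    rw [this, hx]; rfl
  have hm0 : IsLocalRing.maximalIdeal R ≠ ⊥ := IsDiscreteValuationRing.not_a_field _
  rw [← hfin, ← Ideal.sum_ramification_inertia O ℚ_[p] K hm0]
  apply Finset.dvd_sum
  intro P hP
  obtain ⟨hP1, hP2⟩ := (IsDedekindDomain.mem_primesOverFinset_iff hm0 _).mp hP
  have hPb : P ≠ ⊥ := Ideal.ne_bot_of_liesOver_of_ne_bot hm0 P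
  have hPmax : P.IsMaximal := hP1.isMaximal hPb
  let v : IsDedekindDomain.HeightOneSpectrum O := ⟨P, hP1, hPb⟩
  have hpm : (p : R) ∈ IsLocalRing.maximalIdeal R := by
    rw [PadicInt.maximalIdeal_eq_span_p]; exact Ideal.mem_span_singleton_self _
  have hpP : (p : O) ∈ P := by
    have := (Ideal.mem_of_liesOver P (IsLocalRing.maximalIdeal R) (p : R)).mp hpm
    rwa [map_natCast] at this
  subst hFdef
  obtain ⟨h1, h2⟩ := local_part p n hpn m ‹_› φ hφmonic hφirr a hdeg hcont (by omega) v hpP θ hθ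
  have hmap : Ideal.map (algebraMap R O) (IsLocalRing.maximalIdeal R) = Ideal.span {(p : O)} := by
    rw [PadicInt.maximalIdeal_eq_span_p, Ideal.map_span, Set.image_singleton, map_natCast]
  have hp0 : (p : O) ≠ 0 := by exact_mod_cast hp.out.ne_zero
  apply mul_dvd_mul
  · apply h2
    rw [Ideal.IsDedekindDomain.ramificationIdx'_eq_multiplicity _ hP1, hmap,
      v.intValuation_eq_exp_neg_multiplicity hp0]
    rw [hmap]; simpa using hp0
  · exact deg_dvd_inertia p φ hφmonic hφirr P θ h1
end
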